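/- arXiv:1303.6469 — 2 statements merged into one kernel-verified Lean document; each statement's English description precedes it below -/
import Mathlib

section
/- Let (μ₀, μ) be finite nonnegative Borel measures, with μ₀ supported in X and μ supported in X × U, satisfying the continuous-time discounted Liouville equation. Then there exists a finite nonnegative Borel measure η on the space C([0,∞); ℝⁿ) of continuous paths (with the topology of uniform convergence on compact sets), concentrated on the set of admissible trajectories, such that the pushforward of η under the evaluation map γ ↦ γ(0) equals μ₀, and for every continuous g : ℝⁿ → ℝ one has ∫ g(x) dμ(x,u) = ∫ (∫_0^∞ e^{−βt} g(γ(t)) dt) dη(γ); i.e., the x-marginal of μ equals the x-marginal of the discounted occupation measure of the family of trajectories distributed according to η. -/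
open MeasureTheory

/-- An admissible trajectory of the convexified inclusion
`ẋ(t) ∈ conv f(x(t), U)`, `x(t) ∈ X`, on `[0, ∞)`. -/
def IsAdmissible {n m : ℕ} (X : Set (EuclideanSpace ℝ (Fin n)))
    (U : Set (EuclideanSpace ℝ (Fin m)))
    (f : EuclideanSpace ℝ (Fin n) → EuclideanSpace ℝ (Fin m) → EuclideanSpace ℝ (Fin n))
    (x : ℝ → EuclideanSpace ℝ (Fin n)) : Prop :=
  (∀ t, 0 ≤ t → x t ∈ X) ∧
  ∃ d : ℝ → EuclideanSpace ℝ (Fin n),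
    (∀ t, 0 ≤ t → IntervalIntegrable d volume 0 t) ∧
    (∀ t, 0 ≤ t → x t = x 0 + ∫ s in (0:ℝ)..t, d s) ∧
    (∀ᵐ t ∂(volume.restrict (Set.Ici (0:ℝ))), d t ∈ convexHull ℝ ((f (x t)) '' U))

/-- The continuous-time discounted Liouville equation for the pair `(μ₀, μ)`. -/
def LiouvilleC {n m : ℕ}
    (f : EuclideanSpace ℝ (Fin n) → EuclideanSpace ℝ (Fin m) → EuclideanSpace ℝ (Fin n))
    (β : ℝ) (μ₀ : Measure (EuclideanSpace ℝ (Fin n)))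
    (μ : Measure (EuclideanSpace ℝ (Fin n) × EuclideanSpace ℝ (Fin m))) : Prop :=
  ∀ v : EuclideanSpace ℝ (Fin n) → ℝ, ContDiff ℝ 1 v →
    β * ∫ p, v p.1 ∂μ = ∫ x, v x ∂μ₀ + ∫ p, fderiv ℝ v p.1 (f p.1 p.2) ∂μ

/-- Borel σ-algebra on the space of continuous paths `C(ℝ, ℝⁿ)` with the compact-open
topology (i.e. the topology of uniform convergence on compact sets). -/
noncomputable instance pathMeasurableSpace (n : ℕ) :
    MeasurableSpace C(ℝ, EuclideanSpace ℝ (Fin n)) := borel _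

section OptimalControl

open Set Filter Topology MeasureTheory Metric
open scoped BoundedContinuousFunction RealInnerProductSpace

section ConvexHull

/-- In finite dimension the convex hull of a compact set is compact. -/
theorem isCompact_convexHull_of_finiteDimensional {E : Type*} [NormedAddCommGroup E]
    [NormedSpace ℝ E] [FiniteDimensional ℝ E] {s : Set E} (hs : IsCompact s) :
    IsCompact (convexHull ℝ s) := by
  rcases s.eq_empty_or_nonempty with rfl | ⟨x₀, hx₀⟩
  · simp
  set N := Module.finrank ℝ E + 1
  have key : convexHull ℝ s = (fun q : (Fin N → ℝ) × (Fin N → E) => ∑ i, q.1 i • q.2 i) ''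
      (stdSimplex ℝ (Fin N) ×ˢ Set.pi univ fun _ => s) := by
    refine Subset.antisymm (fun x hx => ?_) ?_
    · obtain ⟨ι, _, z, w, hz, hind, hw, hw1, rfl⟩ := eq_pos_convex_span_of_mem_convexHull hx
      have hcard : Fintype.card ι ≤ Fintype.card (Fin N) := by
        simpa [N] using hind.card_le_finrank_succ.trans
          (Nat.succ_le_succ (Submodule.finrank_le _))
      obtain ⟨e⟩ := Function.Embedding.nonempty_of_card_le hcard
      have hsum : ∀ g : ι → E, ∀ c : ι → ℝ, ∑ i, (Function.extend e c 0) i •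
          (Function.extend e g fun _ => x₀) i = ∑ i, c i • g i := by
        intro g c
        symm
        refine Fintype.sum_of_injective e e.injective _ _ (fun i hi => ?_) (fun i => ?_)
        · rw [Function.extend_apply' _ _ _ (by simpa using hi)]; simp
        · simp [e.injective.extend_apply]
      refine ⟨(Function.extend e w 0, Function.extend e z fun _ => x₀), ⟨⟨fun i => ?_, ?_⟩, ?_⟩,
        hsum z w⟩
      · by_cases hi : ∃ j, e j = i
        · obtain ⟨j, rfl⟩ := hi
          simpa [e.injective.extend_apply] using (hw j).le
        · simp [Function.extend_apply' _ _ _ hi]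
      · rw [← hw1]
        symm
        refine Fintype.sum_of_injective e e.injective _ _ (fun i hi => ?_) (fun i => ?_)
        · exact Function.extend_apply' _ _ _ (by simpa using hi)
        · simp [e.injective.extend_apply]
      · rintro i -
        by_cases hi : ∃ j, e j = i
        · obtain ⟨j, rfl⟩ := hi
          simpa [e.injective.extend_apply] using hz ⟨j, rfl⟩
        · simpa [Function.extend_apply' _ _ _ hi] using hx₀
    · rintro _ ⟨⟨w, z⟩, ⟨hw, hz⟩, rfl⟩
      exact (convex_convexHull ℝ s).sum_mem (fun i _ => hw.1 i) hw.2
        fun i _ => subset_convexHull ℝ s (hz i (mem_univ i))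
  rw [key]
  refine ((isCompact_stdSimplex ℝ (Fin N)).prod (isCompact_univ_pi fun _ => hs)).image ?_
  fun_prop

end ConvexHull

section Discount

variable {β : ℝ}

theorem integrableOn_exp_neg_mul_Ici (hβ : 0 < β) :
    IntegrableOn (fun t : ℝ => Real.exp (-β * t)) (Ici 0) := by
  rw [integrableOn_Ici_iff_integrableOn_Ioi]
  exact integrableOn_exp_mul_Ioi (by linarith) 0

theorem integral_exp_neg_mul_Ici (hβ : 0 < β) :
    ∫ t in Ici (0:ℝ), Real.exp (-β * t) = 1 / β := by
  rw [integral_Ici_eq_integral_Ioi, integral_exp_mul_Ioi (by linarith)]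
  simp [neg_div_neg_eq]

variable {E : Type*} [NormedAddCommGroup E]

/-- The discounted cost of a path for the running cost `g`. -/
noncomputable def discountedCost (β : ℝ) (g : E → ℝ) (γ : ℝ → E) : ℝ :=
  ∫ t in Ici (0:ℝ), Real.exp (-β * t) * g (γ t)

theorem integrableOn_discountedCost (hβ : 0 < β) (g : E →ᵇ ℝ) {γ : ℝ → E} (hγ : Continuous γ) :
    IntegrableOn (fun t : ℝ => Real.exp (-β * t) * g (γ t)) (Ici 0) :=
  (integrableOn_exp_neg_mul_Ici hβ).mul_bdd (c := ‖g‖)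
    (g.continuous.comp hγ).aestronglyMeasurable (ae_of_all _ fun _ => g.norm_coe_le_norm _)

theorem abs_discountedCost_le (hβ : 0 < β) (g : E →ᵇ ℝ) (γ : ℝ → E) :
    |discountedCost β g γ| ≤ ‖g‖ / β := by
  have h : ‖∫ t in Ici (0:ℝ), Real.exp (-β * t) * g (γ t)‖ ≤
      ∫ t in Ici (0:ℝ), Real.exp (-β * t) * ‖g‖ := by
    refine norm_integral_le_of_norm_le ((integrableOn_exp_neg_mul_Ici hβ).mul_const _)
      (ae_of_all _ fun t => ?_)
    rw [norm_mul, Real.norm_of_nonneg (Real.exp_pos _).le]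
    gcongr
    exact g.norm_coe_le_norm _
  rw [integral_mul_const, integral_exp_neg_mul_Ici hβ] at h
  simpa [discountedCost, div_eq_inv_mul] using h

theorem continuous_discountedCost (hβ : 0 < β) [ProperSpace E] (g : E →ᵇ ℝ) :
    Continuous fun γ : C(ℝ, E) => discountedCost β g γ := by
  refine continuous_of_dominated (bound := fun t => Real.exp (-β * t) * ‖g‖) (fun γ => ?_)
    (fun γ => ae_of_all _ fun t => ?_) ((integrableOn_exp_neg_mul_Ici hβ).mul_const _)
    (ae_of_all _ fun t => ?_)
  · exact (integrableOn_discountedCost hβ g γ.continuous).aestronglyMeasurable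
  · rw [norm_mul, Real.norm_of_nonneg (Real.exp_pos _).le]
    gcongr
    exact g.norm_coe_le_norm _
  · exact continuous_const.mul (g.continuous.comp (continuous_eval_const t))

theorem discountedCost_le_of_shift (hβ : 0 < β) (g : E →ᵇ ℝ) {γ γ' : ℝ → E} (hγ' : Continuous γ')
    {h c : ℝ} (hh : 0 ≤ h) (hshift : ∀ t, 0 ≤ t → γ' (t + h) = γ t)
    (hc : ∀ t ∈ Icc 0 h, g (γ' t) ≤ c) :
    discountedCost β g γ' ≤
      c * ((1 - Real.exp (-β * h)) / β) + Real.exp (-β * h) * discountedCost β g γ := by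
  have hint := integrableOn_discountedCost hβ g hγ'
  have hsplit : discountedCost β g γ' =
      (∫ t in Ico 0 h, Real.exp (-β * t) * g (γ' t)) +
        ∫ t in Ici h, Real.exp (-β * t) * g (γ' t) := by
    rw [discountedCost, ← Ico_union_Ici_eq_Ici hh, setIntegral_union]
    · exact Set.disjoint_left.2 fun t ht ht' => not_lt.2 ht' ht.2
    · exact measurableSet_Ici
    · exact hint.mono_set Ico_subset_Ici_self
    · exact hint.mono_set (Ici_subset_Ici.2 hh)
  have htail : ∫ t in Ici h, Real.exp (-β * t) * g (γ' t) =
      Real.exp (-β * h) * discountedCost β g γ := by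
    have h1 := (measurePreserving_add_right volume h).setIntegral_preimage_emb
      (measurableEmbedding_addRight h) (fun t => Real.exp (-β * t) * g (γ' t)) (Ici h)
    rw [Set.preimage_add_const_Ici, sub_self] at h1
    rw [← h1, discountedCost, ← integral_const_mul]
    refine setIntegral_congr_fun measurableSet_Ici fun t ht => ?_
    rw [hshift t ht, mul_add, Real.exp_add]
    ring
  have hexp : ∫ t in Ico 0 h, Real.exp (-β * t) = (1 - Real.exp (-β * h)) / β := by
    rw [integral_Ico_eq_integral_Ioc, ← intervalIntegral.integral_of_le hh,
      intervalIntegral.integral_comp_mul_left (fun t => Real.exp t) (neg_ne_zero.2 hβ.ne'),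
      integral_exp]
    simp only [mul_zero, Real.exp_zero, smul_eq_mul]
    field_simp
    ring
  have hhead : ∫ t in Ico 0 h, Real.exp (-β * t) * g (γ' t) ≤
      c * ((1 - Real.exp (-β * h)) / β) := by
    rw [← hexp, mul_comm c, ← integral_mul_const]
    refine setIntegral_mono_on (hint.mono_set Ico_subset_Ici_self)
      (((integrableOn_exp_neg_mul_Ici hβ).mono_set Ico_subset_Ici_self).mul_const _)
      measurableSet_Ico fun t ht => ?_
    exact mul_le_mul_of_nonneg_left (hc t ⟨ht.1, ht.2.le⟩) (Real.exp_pos _).le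
  rw [hsplit, htail]
  gcongr

end Discount

section RelaxedPaths

open scoped NNReal

variable {E : Type*} [NormedAddCommGroup E] [InnerProductSpace ℝ E]

/-- Pairs `(γ, a)` of an `M`-Lipschitz path and a killing level `a ∈ [0, 1]` such that, at the times
`t ≥ 0` with `a < exp (-β t)`, the path is `δ`-close to `X` and its velocity satisfies, in
integrated form, `⟪p, γ'⟫ ≤ H γ p + δ ‖p‖` for all `p`. -/
def relaxedPaths (H : E → E → ℝ) (X : Set E) (M : ℝ≥0) (β δ : ℝ) : Set (C(ℝ, E) × ℝ) :=
  {q | q.2 ∈ Icc (0:ℝ) 1 ∧ LipschitzWith M q.1 ∧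
    (∀ t, 0 ≤ t → q.2 < Real.exp (-β * t) → infDist (q.1 t) X ≤ δ) ∧
    ∀ s t, 0 ≤ s → s ≤ t → q.2 < Real.exp (-β * t) → ∀ p,
      ⟪p, q.1 t - q.1 s⟫ ≤ ∫ τ in s..t, (H (q.1 τ) p + δ * ‖p‖)}

variable {H : E → E → ℝ} {X : Set E} {M : ℝ≥0} {β δ : ℝ}

theorem relaxedPaths_mono {δ' : ℝ} (hH : ∀ p, Continuous fun x => H x p) (h : δ ≤ δ') :
    relaxedPaths H X M β δ ⊆ relaxedPaths H X M β δ' := by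
  rintro ⟨γ, a⟩ ⟨ha, hL, h1, h2⟩
  refine ⟨ha, hL, fun t ht hat => (h1 t ht hat).trans h, fun s t hs hst hat p =>
    (h2 s t hs hst hat p).trans ?_⟩
  have hc : Continuous fun τ => H (γ τ) p := (hH p).comp γ.continuous
  refine intervalIntegral.integral_mono_on hst ?_ ?_ fun τ _ => by gcongr
  · exact (hc.add continuous_const).intervalIntegrable _ _
  · exact (hc.add continuous_const).intervalIntegrable _ _

theorem const_mem_relaxedPaths (hβ : 0 < β) (y : E) :
    (ContinuousMap.const ℝ y, (1:ℝ)) ∈ relaxedPaths H X M β δ := by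
  have key : ∀ t, 0 ≤ t → ¬ (1:ℝ) < Real.exp (-β * t) := fun t ht => by
    rw [not_lt, Real.exp_le_one_iff]
    nlinarith
  refine ⟨by simp, LipschitzWith.const' y, fun t ht hat => (key t ht hat).elim,
    fun s t hs hst hat => (key t (hs.trans hst) hat).elim⟩

theorem isClosed_relaxedPaths (hH : ∀ p, Continuous fun x => H x p) :
    IsClosed (relaxedPaths H X M β δ) := by
  have hor : ∀ (t : ℝ) {P : C(ℝ, E) × ℝ → Prop}, IsClosed {q | P q} →
      IsClosed {q : C(ℝ, E) × ℝ | q.2 < Real.exp (-β * t) → P q} := fun t P hP => by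
    simp only [imp_iff_not_or, not_lt, ofPred_or]
    exact (isClosed_le continuous_const continuous_snd).union hP
  have hev : ∀ t : ℝ, Continuous fun q : C(ℝ, E) × ℝ => q.1 t := fun t =>
    (continuous_eval_const t).comp continuous_fst
  refine IsClosed.and (isClosed_Icc.preimage continuous_snd) (IsClosed.and ?_ (IsClosed.and ?_ ?_))
  · exact (isClosed_setOfPred_lipschitzWith M).preimage
      (continuous_coeFun.comp continuous_fst)
  · simp only [ofPred_forall]
    exact isClosed_iInter fun t => isClosed_iInter fun _ => hor t
      (isClosed_le ((continuous_infDist_pt X).comp (hev t)) continuous_const)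
  · simp only [ofPred_forall]
    refine isClosed_iInter fun s => isClosed_iInter fun t => isClosed_iInter fun _ =>
      isClosed_iInter fun _ => ?_
    refine hor t ?_
    simp only [ofPred_forall]
    refine isClosed_iInter fun p => isClosed_le ?_ ?_
    · exact continuous_const.inner ((hev t).sub (hev s))
    · refine intervalIntegral.continuous_parametric_intervalIntegral_of_continuous' ?_ s t
      exact ((hH p).comp ((continuous_eval).comp
        ((continuous_fst.comp continuous_fst).prodMk continuous_snd))).add continuous_const

theorem isCompact_lipschitz_paths {α : Type*} [PseudoMetricSpace α] [ProperSpace α] [T2Space α]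
    {B : Set α} (hB : IsCompact B) (M : ℝ≥0) :
    IsCompact {γ : C(ℝ, α) | LipschitzWith M γ ∧ γ 0 ∈ B} := by
  apply ArzelaAscoli.isCompact_of_equicontinuous
  · have himage : ContinuousMap.toFun '' {γ : C(ℝ, α) | LipschitzWith M γ ∧ γ 0 ∈ B} =
        {γ : ℝ → α | LipschitzWith M γ ∧ γ 0 ∈ B} := by
      ext γ
      constructor
      · rintro ⟨γ, hγ, rfl⟩
        exact hγ
      · exact fun hγ => ⟨⟨γ, hγ.1.continuous⟩, hγ, rfl⟩
    rw [himage]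
    refine IsCompact.of_isClosed_subset
      (isCompact_univ_pi fun t : ℝ => hB.isBounded.isCompact_closure.cthickening
        (r := M * dist t 0)) ?_ ?_
    · exact (isClosed_setOfPred_lipschitzWith M).inter
        (hB.isClosed.preimage (continuous_apply (0:ℝ)))
    · rintro γ ⟨hL, h0⟩ t -
      exact mem_cthickening_of_dist_le _ (γ 0) _ _ (subset_closure h0) (hL.dist_le_mul t 0)
  · exact (LipschitzWith.uniformEquicontinuous _ M fun γ => γ.2.1).equicontinuous

theorem isCompact_relaxedPaths [ProperSpace E] (hH : ∀ p, Continuous fun x => H x p) {B : Set E}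
    (hB : IsCompact B) : IsCompact (relaxedPaths H X M β δ ∩ {q | q.1 0 ∈ B}) := by
  refine ((isCompact_lipschitz_paths hB M).prod
    (isCompact_Icc (a := (0:ℝ)) (b := 1))).of_isClosed_subset
    ((isClosed_relaxedPaths hH).inter (hB.isClosed.preimage
      ((continuous_eval_const (0:ℝ)).comp continuous_fst))) ?_
  rintro ⟨γ, a⟩ ⟨⟨ha, hL, -⟩, h0⟩
  exact ⟨⟨hL, h0⟩, ha⟩

/-- The path which runs with constant velocity `v` until time `h` and then follows `γ`. -/
def prependSegment (γ : C(ℝ, E)) (v : E) (h : ℝ) : C(ℝ, E) where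
  toFun t := γ (max (t - h) 0) + min (t - h) 0 • v
  continuous_toFun := by fun_prop

theorem prependSegment_of_le (γ : C(ℝ, E)) (v : E) {h t : ℝ} (ht : t ≤ h) :
    prependSegment γ v h t = γ 0 + (t - h) • v := by
  simp [prependSegment, max_eq_right (sub_nonpos.2 ht), min_eq_left (sub_nonpos.2 ht)]

theorem prependSegment_of_ge (γ : C(ℝ, E)) (v : E) {h t : ℝ} (ht : h ≤ t) :
    prependSegment γ v h t = γ (t - h) := by
  simp [prependSegment, max_eq_left (sub_nonneg.2 ht), min_eq_right (sub_nonneg.2 ht)]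

theorem lipschitzWith_prependSegment {γ : C(ℝ, E)} (hγ : LipschitzWith M γ) {v : E}
    (hv : ‖v‖ ≤ M) (h : ℝ) : LipschitzWith M (prependSegment γ v h) := by
  refine LipschitzWith.of_dist_le_mul fun s t => ?_
  have h1 : |max (s - h) 0 - max (t - h) 0| + |min (s - h) 0 - min (t - h) 0| = |s - t| := by
    rcases le_total s t with hst | hst
    · rw [abs_of_nonpos, abs_of_nonpos, abs_of_nonpos]
      · linarith [max_add_min (s - h) 0, max_add_min (t - h) 0]
      · linarith
      · linarith [min_le_min_right 0 (sub_le_sub_right hst h)]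
      · linarith [max_le_max_right 0 (sub_le_sub_right hst h)]
    · rw [abs_of_nonneg, abs_of_nonneg, abs_of_nonneg]
      · linarith [max_add_min (s - h) 0, max_add_min (t - h) 0]
      · linarith
      · linarith [min_le_min_right 0 (sub_le_sub_right hst h)]
      · linarith [max_le_max_right 0 (sub_le_sub_right hst h)]
  calc dist (prependSegment γ v h s) (prependSegment γ v h t)
      ≤ dist (γ (max (s - h) 0)) (γ (max (t - h) 0)) +
          dist (min (s - h) 0 • v) (min (t - h) 0 • v) := dist_add_add_le _ _ _ _
    _ ≤ M * |max (s - h) 0 - max (t - h) 0| + M * |min (s - h) 0 - min (t - h) 0| := by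
        refine add_le_add (hγ.dist_le_mul _ _) ?_
        rw [dist_eq_norm, ← sub_smul, norm_smul, Real.norm_eq_abs, mul_comm]
        gcongr
    _ = M * dist s t := by rw [← mul_add, h1, Real.dist_eq]

theorem prependSegment_mem_relaxedPaths (hβ : 0 < β) (hH : ∀ p, Continuous fun x => H x p)
    {γ : C(ℝ, E)} {a : ℝ} (hγ : (γ, a) ∈ relaxedPaths H X M β δ) {v : E} (hv : ‖v‖ ≤ M) {h : ℝ}
    (hh : 0 ≤ h) (hX : ∀ t ∈ Icc 0 h, infDist (prependSegment γ v h t) X ≤ δ)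
    (hvel : ∀ t ∈ Icc 0 h, ∀ p, ⟪p, v⟫ ≤ H (prependSegment γ v h t) p + δ * ‖p‖) :
    (prependSegment γ v h, Real.exp (-β * h) * a) ∈ relaxedPaths H X M β δ := by
  obtain ⟨ha, hL, h1, h2⟩ := hγ
  have hkill : ∀ {t}, Real.exp (-β * h) * a < Real.exp (-β * t) → a < Real.exp (-β * (t - h)) := by
    intro t ht
    have : Real.exp (-β * t) = Real.exp (-β * h) * Real.exp (-β * (t - h)) := by
      rw [← Real.exp_add]; ring_nf
    rw [this] at ht
    exact lt_of_mul_lt_mul_left ht (Real.exp_pos _).le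
  have hc : ∀ p, Continuous fun τ => H (prependSegment γ v h τ) p + δ * ‖p‖ := fun p =>
    ((hH p).comp (prependSegment γ v h).continuous).add continuous_const
  have hearly : ∀ s t, 0 ≤ s → s ≤ t → t ≤ h → ∀ p,
      ⟪p, prependSegment γ v h t - prependSegment γ v h s⟫ ≤
        ∫ τ in s..t, (H (prependSegment γ v h τ) p + δ * ‖p‖) := by
    intro s t hs hst hth p
    have heq : prependSegment γ v h t - prependSegment γ v h s = (t - s) • v := by
      rw [prependSegment_of_le γ v hth, prependSegment_of_le γ v (hst.trans hth)]
      module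
    rw [heq, inner_smul_right]
    calc (t - s) * ⟪p, v⟫ = ∫ _ in s..t, ⟪p, v⟫ := by simp
      _ ≤ _ := intervalIntegral.integral_mono_on hst (by simp) ((hc p).intervalIntegrable _ _)
          fun τ hτ => hvel τ ⟨hs.trans hτ.1, hτ.2.trans hth⟩ p
  have hlate : ∀ s t, h ≤ s → s ≤ t → Real.exp (-β * h) * a < Real.exp (-β * t) → ∀ p,
      ⟪p, prependSegment γ v h t - prependSegment γ v h s⟫ ≤
        ∫ τ in s..t, (H (prependSegment γ v h τ) p + δ * ‖p‖) := by
    intro s t hs hst hat p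
    rw [prependSegment_of_ge γ v hs, prependSegment_of_ge γ v (hs.trans hst)]
    refine (h2 (s - h) (t - h) (sub_nonneg.2 hs) (by linarith) (hkill hat) p).trans_eq ?_
    rw [← intervalIntegral.integral_comp_sub_right (fun τ => H (γ τ) p + δ * ‖p‖)]
    refine intervalIntegral.integral_congr fun τ hτ => ?_
    rw [uIcc_of_le hst] at hτ
    simp only [prependSegment_of_ge γ v (hs.trans hτ.1)]
  refine ⟨⟨mul_nonneg (Real.exp_pos _).le ha.1, ?_⟩, lipschitzWith_prependSegment hL hv h, ?_, ?_⟩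
  · refine mul_le_one₀ (Real.exp_le_one_iff.2 ?_) ha.1 ha.2
    nlinarith
  · intro t ht hat
    rcases le_total t h with hth | hth
    · exact hX t ⟨ht, hth⟩
    · simp only [prependSegment_of_ge γ v hth]
      exact h1 _ (sub_nonneg.2 hth) (hkill hat)
  · intro s t hs hst hat p
    rcases le_total t h with hth | hth
    · exact hearly s t hs hst hth p
    rcases le_total h s with hsh | hsh
    · exact hlate s t hsh hst hat p
    have e1 := hearly s h hs hsh le_rfl p
    have e2 := hlate h t le_rfl hth hat p
    rw [← intervalIntegral.integral_add_adjacent_intervals ((hc p).intervalIntegrable s h)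
      ((hc p).intervalIntegrable h t)]
    refine le_trans (le_of_eq ?_) (add_le_add e1 e2)
    rw [← inner_add_right]
    congr 1
    simp only
    abel

end RelaxedPaths

section ValueFunction

open scoped NNReal

variable {E : Type*} [NormedAddCommGroup E]

/-- The discounted cost of a relaxed path, where being killed at level `a` costs `N * a`. -/
noncomputable def penalizedCost (β N : ℝ) (g : E → ℝ) (q : C(ℝ, E) × ℝ) : ℝ :=
  discountedCost β g q.1 + N * q.2

variable {β N : ℝ} {g : E →ᵇ ℝ}

theorem continuous_penalizedCost [ProperSpace E] (hβ : 0 < β) :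
    Continuous (penalizedCost β N g) :=
  ((continuous_discountedCost hβ g).comp continuous_fst).add
    (continuous_const.mul continuous_snd)

variable [InnerProductSpace ℝ E]

/-- The value function of the penalized optimal control problem over relaxed paths. -/
noncomputable def valueFunction (H : E → E → ℝ) (X : Set E) (M : ℝ≥0) (β δ N : ℝ)
    (g : E → ℝ) (y : E) : ℝ :=
  sInf (penalizedCost β N g '' {q | q ∈ relaxedPaths H X M β δ ∧ q.1 0 = y})

variable {H : E → E → ℝ} {X : Set E} {M : ℝ≥0} {δ : ℝ}

theorem neg_le_penalizedCost (hβ : 0 < β) (hN : 0 ≤ N) {q : C(ℝ, E) × ℝ}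
    (hq : q ∈ relaxedPaths H X M β δ) : -(‖g‖ / β) ≤ penalizedCost β N g q := by
  have h1 := (abs_le.1 (abs_discountedCost_le hβ g q.1)).1
  have h2 := mul_nonneg hN hq.1.1
  rw [penalizedCost]
  linarith

theorem valueFunction_le (hβ : 0 < β) (hN : 0 ≤ N) {q : C(ℝ, E) × ℝ}
    (hq : q ∈ relaxedPaths H X M β δ) :
    valueFunction H X M β δ N g (q.1 0) ≤ penalizedCost β N g q := by
  refine csInf_le ⟨-(‖g‖ / β), ?_⟩ ⟨q, ⟨hq, rfl⟩, rfl⟩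
  rintro _ ⟨q', hq', rfl⟩
  exact neg_le_penalizedCost hβ hN hq'.1

theorem le_valueFunction (hβ : 0 < β) {y : E} {b : ℝ}
    (h : ∀ q ∈ relaxedPaths H X M β δ, q.1 0 = y → b ≤ penalizedCost β N g q) :
    b ≤ valueFunction H X M β δ N g y := by
  refine le_csInf (Set.Nonempty.image _ ⟨_, const_mem_relaxedPaths hβ y, rfl⟩) ?_
  rintro _ ⟨q, hq, rfl⟩
  exact h q hq.1 hq.2

theorem valueFunction_lt_iff (hβ : 0 < β) (hN : 0 ≤ N) {y : E} {b : ℝ} :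
    valueFunction H X M β δ N g y < b ↔
      ∃ q ∈ relaxedPaths H X M β δ, q.1 0 = y ∧ penalizedCost β N g q < b := by
  constructor
  · intro h
    by_contra! hcon
    exact h.not_ge (le_valueFunction hβ hcon)
  · rintro ⟨q, hq, rfl, hb⟩
    exact (valueFunction_le hβ hN hq).trans_lt hb

theorem abs_valueFunction_le (hβ : 0 < β) (hN : 0 ≤ N) (y : E) :
    |valueFunction H X M β δ N g y| ≤ ‖g‖ / β + N := by
  refine abs_le.2 ⟨?_, ?_⟩
  · refine le_valueFunction hβ fun q hq _ => ?_
    linarith [neg_le_penalizedCost (g := g) hβ hN hq]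
  · refine (valueFunction_le hβ hN (const_mem_relaxedPaths hβ y)).trans ?_
    rw [penalizedCost, mul_one]
    gcongr
    exact (abs_le.1 (abs_discountedCost_le hβ g _)).2

theorem measurable_valueFunction [ProperSpace E] [MeasurableSpace E] [BorelSpace E] (hβ : 0 < β)
    (hN : 0 ≤ N) (hH : ∀ p, Continuous fun x => H x p) :
    Measurable (valueFunction H X M β δ N g) := by
  refine measurable_of_Iio fun b => ?_
  have h : valueFunction H X M β δ N g ⁻¹' Iio b = ⋃ (k : ℕ) (c : ℚ) (_ : (c:ℝ) < b),
      (fun q : C(ℝ, E) × ℝ => q.1 0) '' ((relaxedPaths H X M β δ ∩ {q | q.1 0 ∈ closedBall 0 k}) ∩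
        {q | penalizedCost β N g q ≤ c}) := by
    ext y
    simp only [mem_preimage, mem_Iio, valueFunction_lt_iff hβ hN, mem_iUnion]
    constructor
    · rintro ⟨q, hq, rfl, hb⟩
      obtain ⟨k, hk⟩ := exists_nat_ge ‖q.1 0‖
      obtain ⟨c, hc1, hc2⟩ := exists_rat_btwn hb
      exact ⟨k, c, hc2, q, ⟨⟨hq, by simpa using hk⟩, hc1.le⟩, rfl⟩
    · rintro ⟨k, c, hcb, q, ⟨⟨hq, -⟩, hc⟩, rfl⟩
      exact ⟨q, hq, rfl, lt_of_le_of_lt hc hcb⟩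
  rw [h]
  refine MeasurableSet.iUnion fun k => MeasurableSet.iUnion fun c => MeasurableSet.iUnion fun _ =>
    IsCompact.measurableSet ?_
  exact ((isCompact_relaxedPaths hH (isCompact_closedBall _ _)).inter_right
    (isClosed_le (continuous_penalizedCost hβ) continuous_const)).image
    ((continuous_eval_const (0:ℝ)).comp continuous_fst)

/-- Dynamic programming inequality along a segment with constant velocity. -/
theorem valueFunction_le_of_segment (hβ : 0 < β) (hN : 0 ≤ N)
    (hH : ∀ p, Continuous fun x => H x p) {y v : E} (hv : ‖v‖ ≤ M) {h c : ℝ} (hh : 0 ≤ h)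
    (hX : ∀ t ∈ Icc 0 h, infDist (y + t • v) X ≤ δ)
    (hvel : ∀ t ∈ Icc 0 h, ∀ p, ⟪p, v⟫ ≤ H (y + t • v) p + δ * ‖p‖)
    (hg : ∀ t ∈ Icc 0 h, g (y + t • v) ≤ c) :
    valueFunction H X M β δ N g y ≤ c * ((1 - Real.exp (-β * h)) / β) +
      Real.exp (-β * h) * valueFunction H X M β δ N g (y + h • v) := by
  suffices hs : (valueFunction H X M β δ N g y - c * ((1 - Real.exp (-β * h)) / β)) /
      Real.exp (-β * h) ≤ valueFunction H X M β δ N g (y + h • v) by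
    rw [div_le_iff₀ (Real.exp_pos _)] at hs
    linarith
  refine le_valueFunction hβ fun q hq hq0 => ?_
  obtain ⟨γ, a⟩ := q
  have hseg : ∀ t ≤ h, prependSegment γ v h t = y + t • v := fun t ht => by
    rw [prependSegment_of_le γ v ht, show γ 0 = y + h • v from hq0]
    module
  have hmem := prependSegment_mem_relaxedPaths hβ hH hq hv hh
    (fun t ht => by rw [hseg t ht.2]; exact hX t ht)
    (fun t ht => by rw [hseg t ht.2]; exact hvel t ht)
  have h1 := valueFunction_le (g := g) hβ hN hmem
  have h2 := discountedCost_le_of_shift hβ g (prependSegment γ v h).continuous hh (γ := γ) (c := c)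
    (fun t ht => by rw [prependSegment_of_ge γ v (by linarith)]; simp)
    (fun t ht => by rw [hseg t ht.2]; exact hg t ht)
  rw [hseg 0 hh, zero_smul, add_zero] at h1
  rw [div_le_iff₀ (Real.exp_pos _)]
  simp only [penalizedCost] at h1 ⊢
  linarith

end ValueFunction

section Mollification

variable {E : Type*} [NormedAddCommGroup E] [InnerProductSpace ℝ E] [FiniteDimensional ℝ E]
  [MeasurableSpace E] [BorelSpace E]

theorem HasDerivAt.nonneg_of_eventually_le {ψ : ℝ → ℝ} {d a : ℝ} (h : HasDerivAt ψ d a)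
    (hψ : ∀ᶠ t in 𝓝[>] a, ψ a ≤ ψ t) : 0 ≤ d := by
  have ht := h.hasDerivWithinAt (s := Ioi a)
  rw [hasDerivWithinAt_iff_tendsto_slope' (by simp)] at ht
  refine ge_of_tendsto ht ?_
  filter_upwards [hψ, self_mem_nhdsWithin] with t ht1 ht2
  rw [slope_def_field]
  exact div_nonneg (sub_nonneg.2 ht1) (sub_nonneg.2 (le_of_lt ht2))

/-- Mollifying a bounded measurable function which satisfies a dynamic programming inequality
gives a smooth function satisfying the corresponding differential inequality. -/
theorem exists_contDiff_of_dynamicProgramming {V : E → ℝ} (hV : Measurable V) {C : ℝ}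
    (hC : ∀ x, |V x| ≤ C) {β r : ℝ} (hβ : 0 < β) (hr : 0 < r) :
    ∃ v : E → ℝ, ContDiff ℝ 1 v ∧ (∀ x b, (∀ y ∈ ball x r, b ≤ V y) → b ≤ v x) ∧
      ∀ x w c h₀, 0 < h₀ → (∀ y ∈ ball x r, ∀ h ∈ Icc 0 h₀,
        V y ≤ c * ((1 - Real.exp (-β * h)) / β) + Real.exp (-β * h) * V (y + h • w)) →
        β * v x - fderiv ℝ v x w ≤ c := by
  let φ : ContDiffBump (0:E) := ⟨r / 2, r, half_pos hr, half_lt_self hr⟩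
  set ρ : E → ℝ := φ.normed volume with hρ
  have hρ0 : ∀ z, 0 ≤ ρ z := fun z => φ.nonneg_normed z
  have hρ1 : ∫ z, ρ z = 1 := φ.integral_normed
  have hρi : Integrable ρ := φ.integrable_normed
  have hρr : ∀ z, z ∉ ball (0:E) r → ρ z = 0 := fun z hz => by
    rw [← Function.notMem_support, hρ, φ.support_normed_eq]
    exact hz
  have hint : ∀ x, Integrable fun z => ρ z * V (x - z) := fun x =>
    hρi.mul_bdd (c := C) (hV.comp (measurable_const.sub measurable_id)).aestronglyMeasurable
      (ae_of_all _ fun z => hC _)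
  have hloc : LocallyIntegrable V := by
    refine (memLp_top_of_bound hV.aestronglyMeasurable C (ae_of_all _ hC)).locallyIntegrable le_top
  set v : E → ℝ := fun x => ∫ z, ρ z * V (x - z) with hv
  have hsmooth : ContDiff ℝ 1 v :=
    φ.hasCompactSupport_normed.contDiff_convolution_left (ContinuousLinearMap.lsmul ℝ ℝ)
      φ.contDiff_normed hloc
  have hmono : ∀ {A B : E → ℝ}, Integrable (fun z => ρ z * A z) → Integrable (fun z => ρ z * B z) →
      (∀ z ∈ ball (0:E) r, A z ≤ B z) → ∫ z, ρ z * A z ≤ ∫ z, ρ z * B z := by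
    intro A B hA hB hAB
    refine integral_mono hA hB fun z => ?_
    by_cases hz : z ∈ ball (0:E) r
    · exact mul_le_mul_of_nonneg_left (hAB z hz) (hρ0 z)
    · simp [hρr z hz]
  have hball : ∀ {x z : E}, z ∈ ball (0:E) r → x - z ∈ ball x r := fun {x z} hz => by
    simpa [mem_ball_iff_norm] using hz
  refine ⟨v, hsmooth, fun x b hb => ?_, fun x w c h₀ hh₀ hdpp => ?_⟩
  · have := hmono (hρi.mul_const b) (hint x) fun z hz => hb _ (hball hz)
    rwa [integral_mul_const, hρ1, one_mul] at this
  · have hineq : ∀ h ∈ Icc 0 h₀,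
        v x ≤ c * ((1 - Real.exp (-β * h)) / β) + Real.exp (-β * h) * v (x + h • w) := by
      intro h hh
      set A := c * ((1 - Real.exp (-β * h)) / β)
      set B := Real.exp (-β * h)
      have heq : ∀ z, ρ z * (A + B * V (x + h • w - z)) =
          ρ z * A + B * (ρ z * V (x + h • w - z)) := fun z => by ring
      have hi2 : Integrable fun z => ρ z * (A + B * V (x + h • w - z)) := by
        simp_rw [heq]
        exact (hρi.mul_const A).add ((hint _).const_mul B)
      have := hmono (hint x) hi2 fun z hz => by
        have := hdpp _ (hball (x := x) hz) h hh
        rwa [sub_add_eq_add_sub] at this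
      simp_rw [heq] at this
      rwa [integral_add (hρi.mul_const A) ((hint _).const_mul B), integral_mul_const, hρ1, one_mul,
        integral_const_mul] at this
    have hline : HasDerivAt (fun h : ℝ => v (x + h • w)) (fderiv ℝ v x w) 0 := by
      have h1 : HasFDerivAt v (fderiv ℝ v x) (x + (0:ℝ) • w) := by
        simpa using ((hsmooth.differentiable one_ne_zero) x).hasFDerivAt
      have h2 : HasDerivAt (fun h : ℝ => x + h • w) w 0 := by
        simpa using ((hasDerivAt_id (0:ℝ)).smul_const w).const_add x
      exact h1.comp_hasDerivAt 0 h2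
    have hexp : HasDerivAt (fun h : ℝ => Real.exp (-β * h)) (-β) 0 := by
      simpa using ((hasDerivAt_id (0:ℝ)).const_mul (-β)).exp
    have hψ := (((hexp.const_sub 1).div_const β).const_mul c).add (hexp.mul hline)
    have := hψ.nonneg_of_eventually_le (by
      filter_upwards [Ioc_mem_nhdsGT hh₀] with h hh
      simpa using hineq h ⟨hh.1.le, hh.2⟩)
    simp only [neg_neg, div_self hβ.ne', mul_one, mul_zero, zero_smul, add_zero, Real.exp_zero,
      one_mul] at this
    linarith

end Mollification

section Duality

open scoped NNReal

variable {E : Type*} [NormedAddCommGroup E] [InnerProductSpace ℝ E]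

/-- The `M`-Lipschitz paths which stay in `X` for `t ≥ 0` and whose velocity satisfies, in
integrated form, `⟪p, γ'⟫ ≤ H γ p` for all `p`. -/
def viablePaths (H : E → E → ℝ) (X : Set E) (M : ℝ≥0) : Set C(ℝ, E) :=
  {γ | LipschitzWith M γ ∧ (∀ t, 0 ≤ t → γ t ∈ X) ∧
    ∀ s t, 0 ≤ s → s ≤ t → ∀ p, ⟪p, γ t - γ s⟫ ≤ ∫ τ in s..t, H (γ τ) p}

variable {H : E → E → ℝ} {X : Set E} {M : ℝ≥0} {β : ℝ}

theorem isCompact_viablePaths [ProperSpace E] (hX : IsCompact X)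
    (hH : ∀ p, Continuous fun x => H x p) : IsCompact (viablePaths H X M) := by
  refine (isCompact_lipschitz_paths hX M).of_isClosed_subset ?_
    fun γ hγ => ⟨hγ.1, hγ.2.1 0 le_rfl⟩
  refine IsClosed.and ?_ (IsClosed.and ?_ ?_)
  · exact (isClosed_setOfPred_lipschitzWith M).preimage continuous_coeFun
  · simp only [ofPred_forall]
    exact isClosed_iInter fun t => isClosed_iInter fun _ =>
      hX.isClosed.preimage (continuous_eval_const t)
  · simp only [ofPred_forall]
    refine isClosed_iInter fun s => isClosed_iInter fun t => isClosed_iInter fun _ =>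
      isClosed_iInter fun _ => isClosed_iInter fun p => isClosed_le ?_ ?_
    · exact continuous_const.inner ((continuous_eval_const t).sub (continuous_eval_const s))
    · exact intervalIntegral.continuous_parametric_intervalIntegral_of_continuous'
        (f := fun γ : C(ℝ, E) => fun τ => H (γ τ) p) ((hH p).comp continuous_eval) s t

theorem mem_viablePaths_of_forall_mem_relaxedPaths (hXc : IsClosed X) (hXne : X.Nonempty)
    (hH : ∀ p, Continuous fun x => H x p) {γ : C(ℝ, E)}
    (h : ∀ N : ℕ, (γ, (0:ℝ)) ∈ relaxedPaths H X M β (1 / ((N:ℝ) + 1))) :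
    γ ∈ viablePaths H X M := by
  refine ⟨(h 0).2.1, fun t ht => ?_, fun s t hs hst p => ?_⟩
  · rw [hXc.mem_iff_infDist_zero hXne]
    exact le_antisymm (ge_of_tendsto' tendsto_one_div_add_atTop_nhds_zero_nat
      fun N => (h N).2.2.1 t ht (Real.exp_pos _)) infDist_nonneg
  · have hc : Continuous fun τ => H (γ τ) p := (hH p).comp γ.continuous
    have hlim : Tendsto (fun N : ℕ => (∫ τ in s..t, H (γ τ) p) +
        (1 / ((N:ℝ) + 1)) * ((t - s) * ‖p‖)) atTop (𝓝 (∫ τ in s..t, H (γ τ) p)) := by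
      simpa using (tendsto_one_div_add_atTop_nhds_zero_nat (𝕜 := ℝ)).mul_const
        ((t - s) * ‖p‖) |>.const_add (∫ τ in s..t, H (γ τ) p)
    refine ge_of_tendsto' hlim fun N => ((h N).2.2.2 s t hs hst (Real.exp_pos _) p).trans_eq ?_
    rw [intervalIntegral.integral_add (hc.intervalIntegrable _ _) (by simp),
      intervalIntegral.integral_const, smul_eq_mul]
    ring

/-- A cost which is nonnegative on viable paths is almost nonnegative on relaxed paths, for a small
enough relaxation and a large enough killing cost. -/
theorem exists_forall_neg_lt_penalizedCost [ProperSpace E] (hβ : 0 < β) (hX : IsCompact X)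
    (hXne : X.Nonempty) (hH : ∀ p, Continuous fun x => H x p) (w g : E →ᵇ ℝ)
    (hpos : ∀ γ ∈ viablePaths H X M, 0 ≤ w (γ 0) + discountedCost β g γ) {ε : ℝ} (hε : 0 < ε) :
    ∃ N : ℕ, ∀ q ∈ relaxedPaths H X M β (1 / ((N:ℝ) + 1)),
      infDist (q.1 0) X ≤ 1 / ((N:ℝ) + 1) → -ε < w (q.1 0) + penalizedCost β N g q := by
  by_contra! hcon
  let S : ℕ → Set (C(ℝ, E) × ℝ) := fun N =>
    (relaxedPaths H X M β (1 / ((N:ℝ) + 1)) ∩ {q | q.1 0 ∈ cthickening (1 / ((N:ℝ) + 1)) X}) ∩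
      {q | w (q.1 0) + penalizedCost β N g q ≤ -ε}
  have hScomp : ∀ N, IsCompact (S N) := fun N =>
    (isCompact_relaxedPaths hH hX.cthickening).inter_right (isClosed_le
      ((w.continuous.comp ((continuous_eval_const (0:ℝ)).comp continuous_fst)).add
        (continuous_penalizedCost hβ)) continuous_const)
  have hSne : ∀ N, (S N).Nonempty := fun N => by
    obtain ⟨q, hq, hq0, hqε⟩ := hcon N
    refine ⟨q, ⟨hq, ?_⟩, hqε⟩
    exact mem_cthickening_iff.2 ((ENNReal.le_ofReal_iff_toReal_le (infEDist_ne_top hXne)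
      (by positivity)).2 hq0)
  have hSanti : ∀ N, S (N + 1) ⊆ S N := fun N q hq => by
    have hle : 1 / (((N + 1 : ℕ):ℝ) + 1) ≤ 1 / ((N:ℝ) + 1) := by
      push_cast
      gcongr
      linarith
    refine ⟨⟨relaxedPaths_mono hH hle hq.1.1, cthickening_mono hle _ hq.1.2⟩, ?_⟩
    have h1 := hq.1.1.1.1
    have h2 : w (q.1 0) + penalizedCost β (N + 1 : ℕ) g q ≤ -ε := hq.2
    rw [penalizedCost] at h2
    push_cast at h2
    show w (q.1 0) + penalizedCost β N g q ≤ -ε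
    rw [penalizedCost]
    linarith
  obtain ⟨⟨γ, a⟩, hq⟩ := IsCompact.nonempty_iInter_of_sequence_nonempty_isCompact_isClosed S hSanti
    hSne (hScomp 0) fun N => (hScomp N).isClosed
  rw [mem_iInter] at hq
  have hbound : ∀ N : ℕ, w (γ 0) + (discountedCost β g γ + N * a) ≤ -ε := fun N => (hq N).2
  have ha0 : 0 ≤ a := (hq 0).1.1.1.1
  obtain rfl : a = 0 := by
    by_contra hne
    have hapos : 0 < a := lt_of_le_of_ne ha0 (Ne.symm hne)
    obtain ⟨N, hN⟩ := exists_nat_gt ((-w (γ 0) - discountedCost β g γ) / a)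
    rw [div_lt_iff₀ hapos] at hN
    linarith [hbound N]
  have hγ := mem_viablePaths_of_forall_mem_relaxedPaths hX.isClosed hXne hH fun N => (hq N).1.1
  have h1 := hpos γ hγ
  have h2 := hbound 0
  simp only [mul_zero, add_zero] at h2
  linarith

variable {F : Type*} [PseudoMetricSpace F]

/-- The support function `p ↦ sup_{u ∈ U} ⟪p, f x u⟫` of the set of velocities at `x`. -/
noncomputable def velocitySupport (f : E → F → E) (U : Set F) (x p : E) : ℝ :=
  sSup ((fun u => ⟪p, f x u⟫) '' U)

variable {f : E → F → E} {U : Set F}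

theorem continuous_velocitySupport (hU : IsCompact U) (hf : Continuous fun q : E × F => f q.1 q.2)
    (p : E) : Continuous fun x => velocitySupport f U x p :=
  hU.continuous_sSup (f := fun x u => ⟪p, f x u⟫) (continuous_const.inner hf)

theorem inner_le_velocitySupport (hU : IsCompact U) (hf : Continuous fun q : E × F => f q.1 q.2)
    {x : E} {u : F} (hu : u ∈ U) (p : E) : ⟪p, f x u⟫ ≤ velocitySupport f U x p :=
  le_csSup (hU.image (continuous_const.inner (hf.comp (.prodMk_right x)))).bddAbove ⟨u, hu, rfl⟩

theorem MeasureTheory.integrable_of_continuous_of_measure_compl_eq_zero {α : Type*}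
    [TopologicalSpace α] [T2Space α] [MeasurableSpace α] [BorelSpace α]
    [SecondCountableTopologyEither α ℝ]
    {ν : Measure α} [IsFiniteMeasure ν] {K : Set α} (hK : IsCompact K) (hν : ν Kᶜ = 0) {φ : α → ℝ}
    (hφ : Continuous φ) : Integrable φ ν := by
  have := hφ.continuousOn.integrableOn_compact (μ := ν) hK
  rwa [IntegrableOn, Measure.restrict_eq_self_of_ae_mem (mem_ae_iff.2 hν)] at this

variable [FiniteDimensional ℝ E] [MeasurableSpace E] [BorelSpace E] [SecondCountableTopology F]
  [T2Space F] [MeasurableSpace F] [BorelSpace F]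

/-- The discounted Liouville equation is nonnegative on costs which are nonnegative on all viable
paths. -/
theorem integral_add_integral_nonneg_of_liouville (hX : IsCompact X) (hU : IsCompact U)
    (hXne : X.Nonempty) (hUne : U.Nonempty)
    (hf : Continuous fun q : E × F => f q.1 q.2) (hβ : 0 < β)
    (hM : ∀ x ∈ X, ∀ u ∈ U, ‖f x u‖ ≤ M)
    {μ₀ : Measure E} {μ : Measure (E × F)} [IsFiniteMeasure μ₀] [IsFiniteMeasure μ]
    (hsupp₀ : μ₀ Xᶜ = 0) (hsupp : μ (X ×ˢ U)ᶜ = 0)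
    (hL : ∀ v : E → ℝ, ContDiff ℝ 1 v →
      β * ∫ q, v q.1 ∂μ = ∫ x, v x ∂μ₀ + ∫ q, fderiv ℝ v q.1 (f q.1 q.2) ∂μ)
    (w g : E →ᵇ ℝ)
    (hpos : ∀ γ ∈ viablePaths (velocitySupport f U) X M, 0 ≤ w (γ 0) + discountedCost β g γ) :
    0 ≤ ∫ x, w x ∂μ₀ + ∫ q, g q.1 ∂μ := by
  have hH := continuous_velocitySupport hU hf
  suffices hε : ∀ ε : ℝ, 0 < ε → -(ε * (2 * μ₀.real univ + μ.real univ)) ≤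
      ∫ x, w x ∂μ₀ + ∫ q, g q.1 ∂μ by
    have hlim : Tendsto (fun ε : ℝ => -(ε * (2 * μ₀.real univ + μ.real univ))) (𝓝[>] 0) (𝓝 0) := by
      have : Continuous fun ε : ℝ => -(ε * (2 * μ₀.real univ + μ.real univ)) := by fun_prop
      simpa using (this.tendsto 0).mono_left nhdsWithin_le_nhds
    exact le_of_tendsto hlim (eventually_mem_nhdsWithin.mono hε)
  intro ε hε
  obtain ⟨N, hN⟩ := exists_forall_neg_lt_penalizedCost hβ hX hXne hH w g hpos hε
  set δ : ℝ := 1 / ((N:ℝ) + 1) with hδ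
  have hδpos : 0 < δ := by positivity
  have hunif : ∀ φ : E × F → E × ℝ × ℝ, Continuous φ → ∃ r > 0, ∀ x ∈ X, ∀ u ∈ U, ∀ y,
      dist x y < r → dist (φ (x, u)) (φ (y, u)) < min δ ε := by
    intro φ hφ
    have := (hX.prod hU).uniformContinuousAt_of_continuousAt φ (fun a _ => hφ.continuousAt)
      (dist_mem_uniformity (lt_min hδpos hε))
    obtain ⟨r, hr, h⟩ := mem_uniformity_dist.1 this
    refine ⟨r, hr, fun x hx u hu y hxy => h (a := (x, u)) (b := (y, u)) ?_ ⟨hx, hu⟩⟩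
    simpa [Prod.dist_eq, hr] using hxy
  obtain ⟨r₁, hr₁, hr₁'⟩ := hunif (fun q => (f q.1 q.2, w q.1, g q.1))
    (hf.prodMk ((w.continuous.comp continuous_fst).prodMk (g.continuous.comp continuous_fst)))
  have hclose : ∀ x ∈ X, ∀ u ∈ U, ∀ y, dist x y < r₁ →
      ‖f x u - f y u‖ ≤ δ ∧ |w x - w y| ≤ ε ∧ |g x - g y| ≤ ε := by
    intro x hx u hu y hxy
    have h := hr₁' x hx u hu y hxy
    simp only [Prod.dist_eq, max_lt_iff, lt_min_iff] at h
    rw [← dist_eq_norm, ← Real.dist_eq, ← Real.dist_eq]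
    exact ⟨h.1.1.le, h.2.2.1.le, h.2.2.2.le⟩
  set r : ℝ := min r₁ δ / 2 with hr
  have hrpos : 0 < r := by positivity
  have hr2 : r + r ≤ r₁ ∧ r + r ≤ δ := by
    constructor
    · linarith [min_le_left r₁ δ]
    · linarith [min_le_right r₁ δ]
  have hNn : (0:ℝ) ≤ N := N.cast_nonneg
  obtain ⟨v, hv, hvlow, hvsuper⟩ := exists_contDiff_of_dynamicProgramming
    (measurable_valueFunction (X := X) (M := M) (δ := δ) (g := g) hβ hNn hH)
    (abs_valueFunction_le hβ hNn) hβ hrpos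
  obtain ⟨u₀, hu₀⟩ := hUne
  have hlow : ∀ x ∈ X, -w x - 2 * ε ≤ v x := by
    intro x hx
    refine hvlow x _ fun y hy => le_valueFunction hβ ?_
    rintro q hq rfl
    have hxy : dist x (q.1 0) < r := mem_ball'.1 hy
    have h1 := hN q hq (by
      rw [dist_comm] at hxy
      linarith [infDist_le_dist_of_mem (x := q.1 0) hx, hr2.2])
    have h2 := (abs_le.1 (hclose x hx u₀ hu₀ (q.1 0) (by linarith [hr2.1])).2.1).1
    linarith
  have hsuper : ∀ x ∈ X, ∀ u ∈ U, β * v x - fderiv ℝ v x (f x u) ≤ g x + ε := by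
    intro x hx u hu
    have hMpos : (0:ℝ) < M + 1 := by positivity
    refine hvsuper x (f x u) (g x + ε) (r / (M + 1)) (by positivity) fun y hy h hh => ?_
    have hnear : ∀ t ∈ Icc 0 h, dist x (y + t • f x u) < r + r := by
      intro t ht
      have h1 : dist y (y + t • f x u) ≤ r := by
        rw [dist_self_add_right, norm_smul, Real.norm_of_nonneg ht.1]
        calc t * ‖f x u‖ ≤ r / (M + 1) * (M + 1) := by
              gcongr
              · exact ht.2.trans hh.2
              · linarith [hM x hx u hu]
          _ = r := div_mul_cancel₀ _ hMpos.ne'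
      linarith [dist_triangle x y (y + t • f x u), mem_ball'.1 hy]
    refine valueFunction_le_of_segment hβ hNn hH (hM x hx u hu) hh.1 (fun t ht => ?_)
      (fun t ht p => ?_) fun t ht => ?_
    · have h1 := hnear t ht
      rw [dist_comm] at h1
      linarith [infDist_le_dist_of_mem (x := y + t • f x u) hx, hr2.2]
    · have h1 := (hclose x hx u hu _ ((hnear t ht).trans_le hr2.1)).1
      have h2 : ⟪p, f x u⟫ = ⟪p, f (y + t • f x u) u⟫ + ⟪p, f x u - f (y + t • f x u) u⟫ := by
        rw [← inner_add_right, add_sub_cancel]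
      rw [h2]
      refine add_le_add (inner_le_velocitySupport hU hf hu p)
        ((real_inner_le_norm _ _).trans ?_)
      rw [mul_comm]
      gcongr
    · have := (abs_le.1 (hclose x hx u hu _ ((hnear t ht).trans_le hr2.1)).2.2).1
      linarith
  have hint₀ : ∀ {φ : E → ℝ}, Continuous φ → Integrable φ μ₀ := fun hφ =>
    integrable_of_continuous_of_measure_compl_eq_zero hX hsupp₀ hφ
  have hint : ∀ {φ : E × F → ℝ}, Continuous φ → Integrable φ μ := fun hφ =>
    integrable_of_continuous_of_measure_compl_eq_zero (hX.prod hU) hsupp hφ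
  have hi1 : Integrable (fun q : E × F => β * v q.1) μ :=
    hint (continuous_const.mul (hv.continuous.comp continuous_fst))
  have hi2 : Integrable (fun q : E × F => fderiv ℝ v q.1 (f q.1 q.2)) μ :=
    hint (((hv.continuous_fderiv one_ne_zero).comp continuous_fst).clm_apply hf)
  have hi3 : Integrable (fun q : E × F => g q.1) μ := hint (g.continuous.comp continuous_fst)
  have h1 : ∫ x, v x ∂μ₀ ≤ ∫ q, g q.1 ∂μ + ε * μ.real univ := by
    have : ∫ x, v x ∂μ₀ = ∫ q, (β * v q.1 - fderiv ℝ v q.1 (f q.1 q.2)) ∂μ := by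
      rw [integral_sub hi1 hi2, integral_const_mul, hL v hv, add_sub_cancel_right]
    rw [this]
    calc _ ≤ ∫ q, (g q.1 + ε) ∂μ := by
          refine integral_mono_ae (hi1.sub hi2) (hi3.add (integrable_const ε)) ?_
          filter_upwards [mem_ae_iff.2 hsupp] with q hq using hsuper q.1 hq.1 q.2 hq.2
      _ = _ := by
          rw [integral_add hi3 (integrable_const ε), integral_const, smul_eq_mul, mul_comm]
  have hi4 : Integrable (fun x => -w x) μ₀ := (hint₀ w.continuous).neg
  have h2 : -∫ x, w x ∂μ₀ - 2 * ε * μ₀.real univ ≤ ∫ x, v x ∂μ₀ := by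
    have : -∫ x, w x ∂μ₀ - 2 * ε * μ₀.real univ = ∫ x, (-w x - 2 * ε) ∂μ₀ := by
      rw [integral_sub hi4 (integrable_const _), integral_neg, integral_const,
        smul_eq_mul, mul_comm (μ₀.real univ)]
    rw [this]
    refine integral_mono_ae (hi4.sub (integrable_const _))
      (hint₀ hv.continuous) ?_
    filter_upwards [mem_ae_iff.2 hsupp₀] with x hx using hlow x hx
  linarith

end Duality

section Admissible

open scoped NNReal

variable {E : Type*} [NormedAddCommGroup E] [InnerProductSpace ℝ E]

theorem mem_convexHull_of_forall_inner_le_velocitySupport [FiniteDimensional ℝ E]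
    {F : Type*} [PseudoMetricSpace F] {f : E → F → E} {U : Set F} (hU : IsCompact U) (hUne : U.Nonempty)
    (hf : Continuous fun q : E × F => f q.1 q.2) {x d : E}
    (h : ∀ p, ⟪p, d⟫ ≤ velocitySupport f U x p) : d ∈ convexHull ℝ (f x '' U) := by
  by_contra hd
  have hcomp : IsCompact (convexHull ℝ (f x '' U)) :=
    isCompact_convexHull_of_finiteDimensional (hU.image (hf.comp (.prodMk_right x)))
  obtain ⟨φ, c, hφ, hc⟩ :=
    geometric_hahn_banach_closed_point (convex_convexHull ℝ _) hcomp.isClosed hd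
  refine (h ((InnerProductSpace.toDual ℝ E).symm φ)).not_gt (lt_of_le_of_lt ?_
    (by rwa [InnerProductSpace.toDual_symm_apply]))
  refine csSup_le (hUne.image _) ?_
  rintro _ ⟨u, hu, rfl⟩
  refine InnerProductSpace.toDual_symm_apply.trans_le ?_
  exact (hφ _ (subset_convexHull ℝ _ ⟨u, hu, rfl⟩)).le

variable {H : E → E → ℝ} {X : Set E} {M : ℝ≥0}

theorem inner_le_of_mem_viablePaths (hH : ∀ p, Continuous fun x => H x p) {γ : C(ℝ, E)}
    (hγ : γ ∈ viablePaths H X M) {t : ℝ} (ht : 0 ≤ t) {d : E} (hd : HasDerivAt γ d t) (p : E) :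
    ⟪p, d⟫ ≤ H (γ t) p := by
  have hc : Continuous fun τ => H (γ τ) p := (hH p).comp γ.continuous
  have h1 : HasDerivAt (fun s => (∫ τ in t..s, H (γ τ) p) - ⟪p, γ s - γ t⟫)
      (H (γ t) p - ⟪p, d⟫) t := by
    refine (intervalIntegral.integral_hasDerivAt_right (by simp)
      hc.aestronglyMeasurable.stronglyMeasurableAtFilter hc.continuousAt).sub ?_
    simpa using (hasDerivAt_const t p).inner ℝ (hd.sub_const (γ t))
  refine sub_nonneg.1 (h1.nonneg_of_eventually_le ?_)
  filter_upwards [self_mem_nhdsWithin] with s hs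
  simpa using hγ.2.2 t s ht (le_of_lt hs) p

theorem LipschitzWith.intervalIntegrable_deriv [FiniteDimensional ℝ E] [MeasurableSpace E]
    [BorelSpace E] {γ : ℝ → E} (hγ : LipschitzWith M γ) (a b : ℝ) :
    IntervalIntegrable (deriv γ) volume a b := by
  rw [intervalIntegrable_iff]
  refine Measure.integrableOn_of_bounded (M := M) (by simp)
    (measurable_deriv γ).aestronglyMeasurable (.of_forall fun t => ?_)
  exact norm_deriv_le_of_lipschitz hγ

theorem LipschitzWith.integral_deriv_eq_sub [FiniteDimensional ℝ E] {γ : ℝ → E}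
    (hγ : LipschitzWith M γ) (a b : ℝ) :
    ∫ t in a..b, deriv γ t = γ b - γ a := by
  borelize E
  refine ext_inner_left ℝ fun p => ?_
  have h1 : LipschitzWith (‖innerSL ℝ p‖₊ * M) fun t => ⟪p, γ t⟫ :=
    (innerSL ℝ p).lipschitz.comp hγ
  have h2 := (h1.lipschitzOnWith
    (s := uIcc a b)).absolutelyContinuousOnInterval.integral_deriv_eq_sub
  rw [inner_sub_right, ← h2]
  refine ((innerSL ℝ p).intervalIntegral_comp_comm (hγ.intervalIntegrable_deriv a b)).symm.trans ?_
  refine intervalIntegral.integral_congr_ae ?_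
  filter_upwards [hγ.ae_differentiableAt] with t ht _
  exact (((innerSL ℝ p).hasFDerivAt.comp_hasDerivAt t ht.hasDerivAt).deriv).symm

end Admissible

section Riesz

/-- A linear functional which is nonnegative wherever the linear map `L` into the continuous
functions on a compact space is nonnegative is represented by a measure through `L`. -/
theorem exists_measure_integral_eq_of_nonneg {K : Type*} [TopologicalSpace K] [CompactSpace K]
    [T2Space K] [MeasurableSpace K] [BorelSpace K] {V : Type*} [AddCommGroup V] [Module ℝ V]
    (L : V →ₗ[ℝ] C(K, ℝ)) (Λ : V →ₗ[ℝ] ℝ) (hΛ : ∀ v, 0 ≤ L v → 0 ≤ Λ v) {e : V} (he : L e = 1) :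
    ∃ ν : Measure K, IsFiniteMeasure ν ∧ ∀ v, ∫ x, L v x ∂ν = Λ v := by
  obtain ⟨r, hr⟩ := L.rangeRestrict.exists_rightInverse_of_surjective L.range_rangeRestrict
  have hLr : ∀ y : LinearMap.range L, L (r y) = y := fun y =>
    congrArg Subtype.val (LinearMap.congr_fun hr y)
  obtain ⟨φ, hφ, hφ0⟩ := riesz_extension (PointedCone.positive ℝ C(K, ℝ))
    ⟨LinearMap.range L, Λ ∘ₗ r⟩
    (fun y hy => hΛ _ (by rw [hLr]; exact hy)) fun y => by
      refine ⟨⟨L (‖y‖ • e), _, rfl⟩, ?_⟩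
      intro x
      have := (abs_le.1 ((Real.norm_eq_abs _).symm.trans_le (y.norm_coe_le_norm x))).1
      simp [he]
      linarith
  have hφL : ∀ v, φ (L v) = Λ v := fun v => by
    have h0 : L (r ⟨L v, v, rfl⟩ - v) = 0 := by rw [map_sub, hLr, sub_self]
    have h1 := hΛ (r ⟨L v, v, rfl⟩ - v) h0.ge
    have h2 := hΛ (-(r ⟨L v, v, rfl⟩ - v)) (by rw [map_neg, h0, neg_zero])
    rw [map_neg] at h2
    rw [map_sub] at h1 h2
    have h3 : φ (L v) = Λ (r ⟨L v, v, rfl⟩) := hφ ⟨L v, v, rfl⟩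
    linarith
  let ψ : CompactlySupportedContinuousMap K ℝ →ₚ[ℝ] ℝ := .mk₀
    { toFun := fun h => φ (h : C(K, ℝ))
      map_add' := fun a b => φ.map_add _ _
      map_smul' := fun c a => φ.map_smul _ _ } fun h hh => hφ0 _ hh
  refine ⟨RealRMK.rieszMeasure ψ, inferInstance, fun v => ?_⟩
  rw [← hφL]
  exact RealRMK.integral_rieszMeasure ψ (CompactlySupportedContinuousMap.continuousMapEquiv (L v))

end Riesz

section Superposition

open scoped NNReal

variable {E : Type*} [NormedAddCommGroup E] [InnerProductSpace ℝ E] [FiniteDimensional ℝ E]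
  {β : ℝ}

/-- The linear map sending `(w, g)` to the cost `γ ↦ w (γ 0) + ∫₀^∞ exp (-β t) g (γ t) dt`. -/
noncomputable def costMap (hβ : 0 < β) (K : Set C(ℝ, E)) :
    (E →ᵇ ℝ) × (E →ᵇ ℝ) →ₗ[ℝ] C(K, ℝ) where
  toFun q := ⟨fun γ => q.1 (γ.1 0) + discountedCost β q.2 γ.1,
    ((q.1.continuous.comp (continuous_eval_const (0:ℝ))).add
      (continuous_discountedCost hβ q.2)).comp continuous_subtype_val⟩
  map_add' q q' := by
    ext γ
    have := integral_add (integrableOn_discountedCost hβ q.2 γ.1.continuous)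
      (integrableOn_discountedCost hβ q'.2 γ.1.continuous)
    simp only [← mul_add] at this
    simp only [discountedCost, ContinuousMap.coe_mk, ContinuousMap.add_apply, Prod.fst_add,
      Prod.snd_add, BoundedContinuousFunction.coe_add, Pi.add_apply, this]
    ring
  map_smul' c q := by
    ext γ
    have := integral_const_mul (μ := volume.restrict (Ici 0)) c
      fun t => Real.exp (-β * t) * q.2 (γ.1 t)
    simp only [mul_left_comm c] at this
    simp only [discountedCost, ContinuousMap.coe_mk, ContinuousMap.smul_apply, Prod.smul_fst,
      Prod.smul_snd, BoundedContinuousFunction.coe_smul, smul_eq_mul, this, RingHom.id_apply]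
    ring

variable {F : Type*} [PseudoMetricSpace F] {f : E → F → E} {X : Set E} {U : Set F} {M : ℝ≥0}
  [MeasurableSpace E] [BorelSpace E] [SecondCountableTopology F]
  [T2Space F] [MeasurableSpace F] [BorelSpace F]
  [MeasurableSpace C(ℝ, E)] [BorelSpace C(ℝ, E)]

theorem exists_measure_viablePaths_of_liouville (hX : IsCompact X) (hU : IsCompact U)
    (hXne : X.Nonempty) (hUne : U.Nonempty)
    (hf : Continuous fun q : E × F => f q.1 q.2) (hβ : 0 < β)
    (hM : ∀ x ∈ X, ∀ u ∈ U, ‖f x u‖ ≤ M)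
    {μ₀ : Measure E} {μ : Measure (E × F)} [IsFiniteMeasure μ₀] [IsFiniteMeasure μ]
    (hsupp₀ : μ₀ Xᶜ = 0) (hsupp : μ (X ×ˢ U)ᶜ = 0)
    (hL : ∀ v : E → ℝ, ContDiff ℝ 1 v →
      β * ∫ q, v q.1 ∂μ = ∫ x, v x ∂μ₀ + ∫ q, fderiv ℝ v q.1 (f q.1 q.2) ∂μ) :
    ∃ η : Measure C(ℝ, E), IsFiniteMeasure η ∧
      η (viablePaths (velocitySupport f U) X M)ᶜ = 0 ∧
      (∀ w : E →ᵇ ℝ, ∫ γ, w (γ 0) ∂η = ∫ x, w x ∂μ₀) ∧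
      ∀ g : E →ᵇ ℝ, ∫ γ, discountedCost β g γ ∂η = ∫ q, g q.1 ∂μ := by
  set K := viablePaths (velocitySupport f U) X M
  have hK : IsCompact K := isCompact_viablePaths hX (continuous_velocitySupport hU hf)
  have : CompactSpace K := isCompact_iff_compactSpace.1 hK
  have hint₀ : ∀ w : E →ᵇ ℝ, Integrable w μ₀ := fun w => w.integrable μ₀
  have hint : ∀ g : E →ᵇ ℝ, Integrable (fun q : E × F => g q.1) μ := fun g =>
    (g.compContinuous ⟨_, continuous_fst⟩).integrable μ
  let Λ : (E →ᵇ ℝ) × (E →ᵇ ℝ) →ₗ[ℝ] ℝ :=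
    { toFun := fun q => ∫ x, q.1 x ∂μ₀ + ∫ p, q.2 p.1 ∂μ
      map_add' := fun q q' => by
        simp only [Prod.fst_add, Prod.snd_add, BoundedContinuousFunction.coe_add, Pi.add_apply]
        rw [integral_add (hint₀ q.1) (hint₀ q'.1), integral_add (hint q.2) (hint q'.2)]
        ring
      map_smul' := fun c q => by
        simp only [Prod.smul_fst, Prod.smul_snd, BoundedContinuousFunction.coe_smul, smul_eq_mul,
          integral_const_mul, RingHom.id_apply]
        ring }
  obtain ⟨ν, hν, hνΛ⟩ := exists_measure_integral_eq_of_nonneg (costMap hβ K) Λ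
    (fun q hq => integral_add_integral_nonneg_of_liouville hX hU hXne hUne hf hβ hM hsupp₀ hsupp hL
      q.1 q.2 fun γ hγ => hq ⟨γ, hγ⟩) (e := (.const E 1, 0)) (by
        ext γ
        simp [costMap, discountedCost])
  refine ⟨ν.map Subtype.val, inferInstance, ?_, fun w => ?_, fun g => ?_⟩
  · rw [Measure.map_apply measurable_subtype_coe hK.isClosed.measurableSet.compl]
    simp
  · rw [integral_map (f := fun γ : C(ℝ, E) => w (γ 0)) measurable_subtype_coe.aemeasurable
      (w.continuous.comp (continuous_eval_const (0:ℝ))).aestronglyMeasurable]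
    simpa [costMap, discountedCost, Λ] using hνΛ (w, 0)
  · rw [integral_map measurable_subtype_coe.aemeasurable
      (continuous_discountedCost hβ g).aestronglyMeasurable]
    simpa [costMap, Λ] using hνΛ (0, g)

theorem IsCompact.exists_boundedContinuousFunction_eqOn {α : Type*} [TopologicalSpace α]
    [T4Space α] {K : Set α} (hK : IsCompact K) {g : α → ℝ} (hg : Continuous g) :
    ∃ g' : α →ᵇ ℝ, EqOn g' g K := by
  have := isCompact_iff_compactSpace.1 hK
  obtain ⟨g', -, h⟩ := BoundedContinuousFunction.exists_norm_eq_domRestrict_eq_of_closed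
    (.mkOfCompact ⟨fun x : K => g x, hg.comp continuous_subtype_val⟩) hK.isClosed
  exact ⟨g', fun x hx => DFunLike.congr_fun h ⟨x, hx⟩⟩

end Superposition

section Euclidean

open scoped NNReal

theorem isAdmissible_of_mem_viablePaths {n m : ℕ} {X : Set (EuclideanSpace ℝ (Fin n))}
    {U : Set (EuclideanSpace ℝ (Fin m))}
    {f : EuclideanSpace ℝ (Fin n) → EuclideanSpace ℝ (Fin m) → EuclideanSpace ℝ (Fin n)}
    {M : ℝ≥0} (hU : IsCompact U) (hUne : U.Nonempty)
    (hf : Continuous fun p : EuclideanSpace ℝ (Fin n) × EuclideanSpace ℝ (Fin m) => f p.1 p.2)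
    {γ : C(ℝ, EuclideanSpace ℝ (Fin n))} (hγ : γ ∈ viablePaths (velocitySupport f U) X M) :
    IsAdmissible X U f γ := by
  refine ⟨hγ.2.1, deriv γ, fun t _ => hγ.1.intervalIntegrable_deriv 0 t, fun t _ => ?_, ?_⟩
  · rw [hγ.1.integral_deriv_eq_sub, add_sub_cancel]
  · filter_upwards [ae_restrict_of_ae hγ.1.ae_differentiableAt,
      ae_restrict_mem measurableSet_Ici] with t hd ht
    exact mem_convexHull_of_forall_inner_le_velocitySupport hU hUne hf fun p =>
      inner_le_of_mem_viablePaths (continuous_velocitySupport hU hf) hγ ht hd.hasDerivAt p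

instance (n : ℕ) : BorelSpace C(ℝ, EuclideanSpace ℝ (Fin n)) := ⟨rfl⟩

end Euclidean

end OptimalControl

/-- Superposition: any pair `(μ₀, μ)` satisfying the continuous-time discounted Liouville
equation is generated by a measure `η` on the space of continuous paths concentrated on
admissible trajectories, with `γ ↦ γ(0)` pushing `η` forward to `μ₀` and with the
`x`-marginal of `μ` equal to the `x`-marginal of the discounted occupation measure
of the family of trajectories distributed according to `η`. -/
theorem liouville_superposition {n m : ℕ}
    (X : Set (EuclideanSpace ℝ (Fin n))) (U : Set (EuclideanSpace ℝ (Fin m)))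
    (hX : IsCompact X) (hU : IsCompact U)
    (f : EuclideanSpace ℝ (Fin n) → EuclideanSpace ℝ (Fin m) → EuclideanSpace ℝ (Fin n))
    (hf : Continuous fun p : EuclideanSpace ℝ (Fin n) × EuclideanSpace ℝ (Fin m) => f p.1 p.2)
    (β : ℝ) (hβ : 0 < β)
    (μ₀ : Measure (EuclideanSpace ℝ (Fin n)))
    (μ : Measure (EuclideanSpace ℝ (Fin n) × EuclideanSpace ℝ (Fin m)))
    [IsFiniteMeasure μ₀] [IsFiniteMeasure μ]
    (hsupp₀ : μ₀ Xᶜ = 0) (hsupp : μ (X ×ˢ U)ᶜ = 0)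
    (hLiouville : LiouvilleC f β μ₀ μ) :
    ∃ η : Measure C(ℝ, EuclideanSpace ℝ (Fin n)),
      IsFiniteMeasure η ∧
      η {γ | ¬ IsAdmissible X U f (fun t => γ t)} = 0 ∧
      η.map (fun γ => γ 0) = μ₀ ∧
      ∀ g : EuclideanSpace ℝ (Fin n) → ℝ, Continuous g →
        ∫ p, g p.1 ∂μ
          = ∫ γ, (∫ t in Set.Ici (0:ℝ), Real.exp (-β * t) * g (γ t)) ∂η := by
  obtain rfl | hμ := eq_or_ne μ 0
  · have h1 := hLiouville (fun _ => 1) contDiff_const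
    obtain rfl : μ₀ = 0 := by
      rw [← Measure.measure_univ_eq_zero, ← measureReal_eq_zero_iff]
      simpa using h1.symm
    exact ⟨0, inferInstance, by simp, by simp, by simp⟩
  obtain ⟨⟨x₀, u₀⟩, hx₀, hu₀⟩ : (X ×ˢ U).Nonempty := by
    rw [Set.nonempty_iff_ne_empty]
    rintro h
    rw [h, Set.compl_empty, Measure.measure_univ_eq_zero] at hsupp
    exact hμ hsupp
  obtain ⟨M, hM⟩ := (hX.prod hU).exists_bound_of_continuousOn hf.continuousOn
  obtain ⟨η, hη, hηK, hη₀, hηg⟩ := exists_measure_viablePaths_of_liouville (M := M.toNNReal) hX hU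
    ⟨x₀, hx₀⟩ ⟨u₀, hu₀⟩ hf hβ (fun x hx u hu => (hM (x, u) ⟨hx, hu⟩).trans M.le_coe_toNNReal)
    hsupp₀ hsupp hLiouville
  have heval : Measurable fun γ : C(ℝ, EuclideanSpace ℝ (Fin n)) => γ 0 :=
    (continuous_eval_const (0:ℝ)).measurable
  refine ⟨η, hη, measure_mono_null (fun γ hγ hγK => hγ
    (isAdmissible_of_mem_viablePaths hU ⟨u₀, hu₀⟩ hf hγK)) hηK, ?_, fun g hg => ?_⟩
  · refine ext_of_forall_integral_eq_of_IsFiniteMeasure fun w => ?_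
    rw [integral_map heval.aemeasurable w.continuous.aestronglyMeasurable, hη₀]
  · obtain ⟨g', hg'⟩ := hX.exists_boundedContinuousFunction_eqOn hg
    calc ∫ p, g p.1 ∂μ = ∫ p, g' p.1 ∂μ := by
          refine integral_congr_ae ?_
          filter_upwards [mem_ae_iff.2 hsupp] with p hp using (hg' hp.1).symm
      _ = ∫ γ, discountedCost β g' γ ∂η := (hηg g').symm
      _ = _ := by
          refine integral_congr_ae ?_
          filter_upwards [mem_ae_iff.2 hηK] with γ hγ
          refine setIntegral_congr_fun measurableSet_Ici fun t ht => ?_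
          simp only [hg' (hγ.2.1 t ht)]
end

section
/- The optimal values of the continuous-time dual SOS approximations converge monotonically from above to the optimal value of the continuous-time dual LP: d_{k+1}* ≤ d_k*, d_k* ≥ d* for all k, and lim_{k→∞} d_k* = d*. -/
open MeasureTheory

/-- A polynomial is a sum of squares. -/
def IsSOS {σ : Type*} (p : MvPolynomial σ ℝ) : Prop :=
  ∃ (k : ℕ) (q : Fin k → MvPolynomial σ ℝ), p = ∑ i, (q i) ^ 2

/-- The basic closed semialgebraic set `{x : ∀ i, gᵢ(x) ≥ 0}`. -/
def semiSet {n nX : ℕ} (g : Fin nX → MvPolynomial (Fin n) ℝ) : Set (Fin n → ℝ) :=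
  {x | ∀ i, 0 ≤ MvPolynomial.eval x (g i)}

/-- Evaluation of the polynomial map `f` with components `F i ∈ ℝ[x, u]`. -/
noncomputable def polyMapEval {n m : ℕ} (F : Fin n → MvPolynomial (Fin n ⊕ Fin m) ℝ)
    (x : Fin n → ℝ) (u : Fin m → ℝ) : Fin n → ℝ :=
  fun i => MvPolynomial.eval (Sum.elim x u) (F i)

/-- Feasibility of a pair `(v, w)` (with `v` continuously differentiable and `w`
continuous) for the continuous-time dual LP. -/
def DualFeasC {n m nX nU : ℕ} (g : Fin nX → MvPolynomial (Fin n) ℝ)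
    (h : Fin nU → MvPolynomial (Fin m) ℝ)
    (F : Fin n → MvPolynomial (Fin n ⊕ Fin m) ℝ)
    (β : ℝ) (v w : (Fin n → ℝ) → ℝ) : Prop :=
  ContDiff ℝ 1 v ∧ Continuous w ∧
  (∀ x ∈ semiSet g, ∀ u ∈ semiSet h, fderiv ℝ v x (polyMapEval F x u) ≤ β * v x) ∧
  (∀ x ∈ semiSet g, v x + 1 ≤ w x) ∧
  (∀ x ∈ semiSet g, 0 ≤ w x)

/-- The optimal value `d*` of the continuous-time dual LP. -/
noncomputable def dualValC {n m nX nU : ℕ} (g : Fin nX → MvPolynomial (Fin n) ℝ)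
    (h : Fin nU → MvPolynomial (Fin m) ℝ)
    (F : Fin n → MvPolynomial (Fin n ⊕ Fin m) ℝ) (β : ℝ) : ℝ :=
  sInf {r : ℝ | ∃ v w, DualFeasC g h F β v w ∧ r = ∫ x in semiSet g, w x ∂volume}

/-- `k`-feasibility of a pair of polynomials `(v, w)` for the `k`-th continuous-time
dual SOS (Putinar) approximation. -/
def KFeasC {n m nX nU : ℕ} (g : Fin nX → MvPolynomial (Fin n) ℝ)
    (h : Fin nU → MvPolynomial (Fin m) ℝ)
    (F : Fin n → MvPolynomial (Fin n ⊕ Fin m) ℝ)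
    (β : ℝ) (k : ℕ) (v w : MvPolynomial (Fin n) ℝ) : Prop :=
  v.totalDegree ≤ 2 * k ∧ w.totalDegree ≤ 2 * k ∧
  ∃ (q0 : MvPolynomial (Fin n ⊕ Fin m) ℝ) (q : Fin nX → MvPolynomial (Fin n ⊕ Fin m) ℝ)
    (r : Fin nU → MvPolynomial (Fin n ⊕ Fin m) ℝ)
    (p0 : MvPolynomial (Fin n) ℝ) (p : Fin nX → MvPolynomial (Fin n) ℝ)
    (s0 : MvPolynomial (Fin n) ℝ) (s : Fin nX → MvPolynomial (Fin n) ℝ),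
    IsSOS q0 ∧ (∀ i, IsSOS (q i)) ∧ (∀ j, IsSOS (r j)) ∧
    IsSOS p0 ∧ (∀ i, IsSOS (p i)) ∧ IsSOS s0 ∧ (∀ i, IsSOS (s i)) ∧
    q0.totalDegree ≤ 2 * k * max 1 (Finset.univ.sup fun i => (F i).totalDegree) ∧
    (∀ i, (q i * MvPolynomial.rename Sum.inl (g i)).totalDegree
      ≤ 2 * k * max 1 (Finset.univ.sup fun i => (F i).totalDegree)) ∧
    (∀ j, (r j * MvPolynomial.rename Sum.inr (h j)).totalDegree
      ≤ 2 * k * max 1 (Finset.univ.sup fun i => (F i).totalDegree)) ∧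
    p0.totalDegree ≤ 2 * k ∧ (∀ i, (p i * g i).totalDegree ≤ 2 * k) ∧
    s0.totalDegree ≤ 2 * k ∧ (∀ i, (s i * g i).totalDegree ≤ 2 * k) ∧
    MvPolynomial.C β * MvPolynomial.rename Sum.inl v
        - ∑ i, MvPolynomial.rename Sum.inl (MvPolynomial.pderiv i v) * F i
      = q0 + ∑ i, q i * MvPolynomial.rename Sum.inl (g i)
          + ∑ j, r j * MvPolynomial.rename Sum.inr (h j) ∧
    w - v - 1 = p0 + ∑ i, p i * g i ∧
    w = s0 + ∑ i, s i * g i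

/-- The optimal value `d_k*` of the `k`-th continuous-time dual SOS approximation. -/
noncomputable def sosValC {n m nX nU : ℕ} (g : Fin nX → MvPolynomial (Fin n) ℝ)
    (h : Fin nU → MvPolynomial (Fin m) ℝ)
    (F : Fin n → MvPolynomial (Fin n ⊕ Fin m) ℝ) (β : ℝ) (k : ℕ) : ℝ :=
  sInf {r : ℝ | ∃ v w, KFeasC g h F β k v w ∧
    r = ∫ x in semiSet g, MvPolynomial.eval x w ∂volume}

/-- A quadratic module of a commutative ring: a subset containing `1`, closed under addition and
under multiplication by squares. -/
structure IsQuadraticModule {A : Type*} [CommRing A] (M : Set A) : Prop where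
  one_mem : (1 : A) ∈ M
  add_mem : ∀ {a b : A}, a ∈ M → b ∈ M → a + b ∈ M
  sq_mul_mem : ∀ (a : A) {b : A}, b ∈ M → a ^ 2 * b ∈ M

/-- A subset of a real algebra is Archimedean if every element is bounded above by a constant
with respect to it. -/
def IsArchimedeanSet {A : Type*} [CommRing A] [Algebra ℝ A] (M : Set A) : Prop :=
  ∀ a : A, ∃ N : ℝ, algebraMap ℝ A N - a ∈ M

namespace IsQuadraticModule

variable {A : Type*} [CommRing A] {M : Set A}

theorem zero_mem (hM : IsQuadraticModule M) : (0 : A) ∈ M := by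
  simpa using hM.sq_mul_mem 0 hM.one_mem

theorem sq_mem (hM : IsQuadraticModule M) (a : A) : a ^ 2 ∈ M := by
  simpa using hM.sq_mul_mem a hM.one_mem

variable [Algebra ℝ A]

theorem smul_mem (hM : IsQuadraticModule M) {c : ℝ} (hc : 0 ≤ c) {a : A} (ha : a ∈ M) :
    c • a ∈ M := by
  have := hM.sq_mul_mem (algebraMap ℝ A (√c)) ha
  rwa [← map_pow, Real.sq_sqrt hc, ← Algebra.smul_def] at this

theorem algebraMap_mem (hM : IsQuadraticModule M) {c : ℝ} (hc : 0 ≤ c) :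
    algebraMap ℝ A c ∈ M := by
  rw [Algebra.algebraMap_eq_smul_one]
  exact hM.smul_mem hc hM.one_mem

/-- In an Archimedean quadratic module containing `-1`, everything is contained. -/
theorem mem_of_neg_one_mem (hM : IsQuadraticModule M) (hA : IsArchimedeanSet M)
    (h : (-1 : A) ∈ M) (a : A) : a ∈ M := by
  obtain ⟨N, hN⟩ := hA (-a)
  have h1 := hM.smul_mem (abs_nonneg N) h
  have h2 := hM.algebraMap_mem (A := A) (sub_nonneg.2 (le_abs_self N))
  convert hM.add_mem hN (hM.add_mem h1 h2) using 1
  rw [map_sub, Algebra.algebraMap_eq_smul_one |N|]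
  simp only [smul_neg]
  abel

/-- A quadratic module of polynomials is Archimedean once the squares of the variables are
bounded with respect to it. -/
theorem isArchimedeanSet_mvPolynomial {σ : Type*} {M : Set (MvPolynomial σ ℝ)}
    (hM : IsQuadraticModule M)
    (hX : ∀ s, ∃ N : ℝ, MvPolynomial.C N - MvPolynomial.X s ^ 2 ∈ M) : IsArchimedeanSet M := by
  have key : ∀ p : MvPolynomial σ ℝ, ∃ N : ℝ, 0 ≤ N ∧ MvPolynomial.C N - p ^ 2 ∈ M := by
    have mono : ∀ (p : MvPolynomial σ ℝ) (N : ℝ), MvPolynomial.C N - p ^ 2 ∈ M →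
        ∃ N : ℝ, 0 ≤ N ∧ MvPolynomial.C N - p ^ 2 ∈ M := by
      intro p N h
      refine ⟨|N|, abs_nonneg N, ?_⟩
      have h2 := hM.algebraMap_mem (sub_nonneg.2 (le_abs_self N))
      convert hM.add_mem h h2 using 1
      rw [MvPolynomial.algebraMap_eq, MvPolynomial.C_sub]
      ring
    have mul : ∀ p q : MvPolynomial σ ℝ,
        (∃ N : ℝ, 0 ≤ N ∧ MvPolynomial.C N - p ^ 2 ∈ M) →
        (∃ N : ℝ, 0 ≤ N ∧ MvPolynomial.C N - q ^ 2 ∈ M) →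
        (∃ N : ℝ, 0 ≤ N ∧ MvPolynomial.C N - (p * q) ^ 2 ∈ M) := by
      rintro p q ⟨N, hN, hp⟩ ⟨K, hK, hq⟩
      refine ⟨K * N, mul_nonneg hK hN, ?_⟩
      convert hM.add_mem (hM.smul_mem hK hp) (hM.sq_mul_mem p hq) using 1
      rw [MvPolynomial.C_mul, MvPolynomial.smul_eq_C_mul]
      ring
    intro p
    induction p using MvPolynomial.induction_on with
    | C a =>
      refine ⟨a ^ 2, sq_nonneg a, ?_⟩
      rw [MvPolynomial.C_pow, sub_self]
      exact hM.zero_mem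
    | add p q hp hq =>
      obtain ⟨N, hN, hp⟩ := hp
      obtain ⟨K, hK, hq⟩ := hq
      refine ⟨2 * N + 2 * K, by positivity, ?_⟩
      convert hM.add_mem (hM.add_mem (hM.smul_mem zero_le_two hp) (hM.smul_mem zero_le_two hq))
        (hM.sq_mem (p - q)) using 1
      simp only [MvPolynomial.C_add, MvPolynomial.C_mul, MvPolynomial.smul_eq_C_mul]
      rw [show (MvPolynomial.C 2 : MvPolynomial σ ℝ) = 2 from map_ofNat _ 2]
      ring
    | mul_X p s hp =>
      obtain ⟨N, hN⟩ := hX s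
      exact mul p _ hp (mono _ N hN)
  intro p
  obtain ⟨N, -, hN⟩ := key p
  refine ⟨N + (1 / 2) ^ 2, ?_⟩
  convert hM.add_mem hN (hM.sq_mem (p - MvPolynomial.C (1 / 2))) using 1
  have : (2 : MvPolynomial σ ℝ) * MvPolynomial.C (1 / 2) = 1 := by
    rw [show (2 : MvPolynomial σ ℝ) = MvPolynomial.C 2 from (map_ofNat _ 2).symm,
      ← MvPolynomial.C_mul]
    norm_num
  rw [MvPolynomial.algebraMap_eq, MvPolynomial.C_add, MvPolynomial.C_pow]
  linear_combination p * this

/-- The normalized linear functionals nonnegative on `M`, as a subset of the space of all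
functions. -/
def states (M : Set A) : Set (A → ℝ) :=
  {φ | (∀ a b, φ (a + b) = φ a + φ b) ∧ (∀ (c : ℝ) a, φ (c • a) = c * φ a) ∧
    φ 1 = 1 ∧ ∀ a ∈ M, 0 ≤ φ a}

theorem isCompact_states (hA : IsArchimedeanSet M) : IsCompact (states M) := by
  choose N hN using hA
  refine (isCompact_univ_pi fun a : A => isCompact_Icc (a := -N (-a)) (b := N a)).of_isClosed_subset
    ?_ ?_
  · simp only [states, Set.ofPred_and, Set.ofPred_forall]
    refine ((isClosed_iInter fun a => isClosed_iInter fun b => isClosed_eq ?_ ?_).inter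
      ((isClosed_iInter fun a => isClosed_iInter fun b => isClosed_eq ?_ ?_).inter
      ((isClosed_eq ?_ ?_).inter
        (isClosed_iInter fun a => isClosed_iInter fun b => isClosed_le ?_ ?_)))) <;> fun_prop
  · rintro φ ⟨hadd, hsmul, hone, hnn⟩ a -
    have h : ∀ a, φ a ≤ N a := by
      intro a
      have h1 := hnn _ (hN a)
      have h2 : φ (algebraMap ℝ A (N a) - a + a) = φ (algebraMap ℝ A (N a) - a) + φ a := hadd _ _
      rw [sub_add_cancel, Algebra.algebraMap_eq_smul_one, hsmul, hone] at h2
      rw [Algebra.algebraMap_eq_smul_one] at h1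
      linarith
    have h3 : φ (-a) = -φ a := by
      have := hsmul (-1) a
      simpa using this
    exact ⟨by have := h (-a); rw [h3] at this; linarith, h a⟩

/-- Separation: an element outside an Archimedean quadratic module is nonpositive for some
state. -/
theorem exists_state_nonpos (hM : IsQuadraticModule M) (hA : IsArchimedeanSet M) {f : A}
    (hf : f ∉ M) : ∃ φ ∈ states M, φ f ≤ 0 := by
  have hneg : (-1 : A) ∉ M := fun h => hf (hM.mem_of_neg_one_mem hA h f)
  have hone : (1 : A) ≠ 0 := by
    intro h
    rw [h, neg_zero] at hneg
    exact hneg hM.zero_mem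
  let s : PointedCone ℝ A :=
    { carrier := {x | ∃ m ∈ M, ∃ t : ℝ, 0 ≤ t ∧ x = m - t • f}
      add_mem' := by
        rintro _ _ ⟨m, hm, t, ht, rfl⟩ ⟨m', hm', t', ht', rfl⟩
        exact ⟨m + m', hM.add_mem hm hm', t + t', add_nonneg ht ht', by rw [add_smul]; abel⟩
      zero_mem' := ⟨0, hM.zero_mem, 0, le_rfl, by simp⟩
      smul_mem' := by
        rintro ⟨c, hc⟩ _ ⟨m, hm, t, ht, rfl⟩
        refine ⟨c • m, hM.smul_mem hc hm, c * t, mul_nonneg hc ht, ?_⟩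
        change c • (m - t • f) = _
        rw [smul_sub, smul_smul] }
  let f₀ : A →ₗ.[ℝ] ℝ := LinearPMap.mkSpanSingleton 1 1 hone
  have hf₀ : ∀ (c : ℝ) (h : c • (1 : A) ∈ f₀.domain), f₀ ⟨c • (1 : A), h⟩ = c := by
    intro c h
    exact (LinearPMap.mkSpanSingleton'_apply (1 : A) (1 : ℝ) _ c h).trans (mul_one c)
  have hdom : ∀ c : ℝ, c • (1 : A) ∈ f₀.domain := fun c =>
    Submodule.mem_span_singleton.2 ⟨c, rfl⟩
  obtain ⟨φ, hφ, hnn⟩ := riesz_extension s f₀ (by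
    rintro ⟨x, hx⟩ ⟨m, hm, t, ht, hxt⟩
    obtain ⟨c, rfl⟩ := Submodule.mem_span_singleton.1 hx
    change 0 ≤ f₀ ⟨c • (1 : A), hx⟩
    rw [hf₀]
    by_contra! hc
    simp only at hxt
    rcases ht.eq_or_lt with rfl | ht
    · apply hneg
      rw [zero_smul, sub_zero] at hxt
      have := hM.smul_mem (inv_nonneg.2 (neg_nonneg.2 hc.le)) hm
      rw [← hxt, smul_smul] at this
      convert this using 1
      rw [inv_neg, neg_mul, inv_mul_cancel₀ hc.ne, neg_smul, one_smul]
    · apply hf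
      have := hM.smul_mem (inv_nonneg.2 ht.le)
        (hM.add_mem hm (hM.smul_mem (neg_nonneg.2 hc.le) hM.one_mem))
      convert this using 1
      rw [eq_inv_smul_iff₀ ht.ne', neg_smul, hxt]
      abel) (by
    intro y
    obtain ⟨N, hN⟩ := hA (-y)
    refine ⟨⟨N • (1 : A), hdom N⟩, _, hN, 0, le_rfl, ?_⟩
    rw [Algebra.algebraMap_eq_smul_one]
    simp)
  refine ⟨φ, ⟨fun a b => map_add φ a b, fun c a => by simp, ?_, fun a ha => ?_⟩, ?_⟩
  · have := hφ ⟨(1 : ℝ) • (1 : A), hdom 1⟩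
    rw [hf₀] at this
    simpa using this
  · exact hnn a ⟨a, ha, 0, le_rfl, by simp⟩
  · have := hnn (-f) ⟨0, hM.zero_mem, 1, zero_le_one, by simp⟩
    rw [map_neg] at this
    linarith

/-- If `1 - a ^ 2 ∈ M`, then every state is nonnegative on `(1 - a ^ 2) * M`. -/
theorem state_sq_mul_le (hM : IsQuadraticModule M) (hA : IsArchimedeanSet M) {φ : A →ₗ[ℝ] ℝ}
    (hφ : ∀ a ∈ M, 0 ≤ φ a) {a : A} (ha : 1 - a ^ 2 ∈ M) {m : A} (hm : m ∈ M) :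
    φ (a ^ 2 * m) ≤ φ m := by
  obtain ⟨N, hN⟩ := hA m
  have hpow : ∀ j : ℕ, φ (a ^ (2 * j)) ≤ φ 1 := by
    intro j
    induction j with
    | zero => simp
    | succ j ih =>
      have := hφ _ (hM.sq_mul_mem (a ^ j) ha)
      rw [show (a ^ j) ^ 2 * (1 - a ^ 2) = a ^ (2 * j) - a ^ (2 * (j + 1)) by ring, map_sub] at this
      linarith
  have hbound : ∀ j : ℕ, φ (a ^ (2 * j) * m) ≤ |N| * φ 1 := by
    intro j
    have h0 : algebraMap ℝ A |N| - m ∈ M := by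
      convert hM.add_mem hN (hM.algebraMap_mem (sub_nonneg.2 (le_abs_self N))) using 1
      rw [map_sub]
      ring
    have := hφ _ (hM.sq_mul_mem (a ^ j) h0)
    rw [show (a ^ j) ^ 2 * (algebraMap ℝ A |N| - m) = |N| • a ^ (2 * j) - a ^ (2 * j) * m by
      rw [Algebra.smul_def]; ring, map_sub, map_smul, smul_eq_mul] at this
    have h2 := mul_le_mul_of_nonneg_left (hpow j) (abs_nonneg N)
    linarith
  by_contra! hlt
  set d := φ (a ^ 2 * m) - φ m with hd
  have hdpos : 0 < d := by rw [hd]; linarith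
  have hstep : ∀ j : ℕ, d ≤ φ (a ^ (2 * (j + 1)) * m) - φ (a ^ (2 * j) * m) := by
    intro j
    induction j with
    | zero => simp [hd]
    | succ j ih =>
      have := hφ _ (hM.sq_mul_mem (a ^ j * (a ^ 2 - 1)) hm)
      rw [show (a ^ j * (a ^ 2 - 1)) ^ 2 * m = a ^ (2 * (j + 1 + 1)) * m - a ^ (2 * (j + 1)) * m
        - (a ^ (2 * (j + 1)) * m - a ^ (2 * j) * m) by ring, map_sub, map_sub, map_sub] at this
      linarith
  have hlin : ∀ j : ℕ, (j : ℝ) * d ≤ φ (a ^ (2 * j) * m) := by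
    intro j
    induction j with
    | zero => simpa using hφ m hm
    | succ j ih =>
      have := hstep j
      push_cast
      linarith
  obtain ⟨j, hj⟩ := exists_nat_gt (|N| * φ 1 / d)
  rw [div_lt_iff₀ hdpos] at hj
  linarith [hlin j, hbound j]

/-- Extreme states of an Archimedean quadratic module are multiplicative. -/
theorem map_mul_of_mem_extremePoints (hM : IsQuadraticModule M) (hA : IsArchimedeanSet M)
    {φ : A →ₗ[ℝ] ℝ} (hφ : (φ : A → ℝ) ∈ (states M).extremePoints ℝ) (a b : A) :
    φ (a * b) = φ a * φ b := by
  obtain ⟨⟨-, -, hone, hnn⟩, hext⟩ := hφ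
  have habs : ∀ b : A, ∃ N : ℝ, algebraMap ℝ A N - b ∈ M ∧ algebraMap ℝ A N + b ∈ M := by
    intro b
    obtain ⟨N, hN⟩ := hA b
    obtain ⟨K, hK⟩ := hA (-b)
    refine ⟨max N K, ?_, ?_⟩
    · convert hM.add_mem hN (hM.algebraMap_mem (sub_nonneg.2 (le_max_left N K))) using 1
      rw [map_sub]; ring
    · convert hM.add_mem hK (hM.algebraMap_mem (sub_nonneg.2 (le_max_right N K))) using 1
      rw [map_sub]; ring
  have small : ∀ a : A, 1 - a ^ 2 ∈ M → φ (a ^ 2) < 1 → ∀ b, φ (a ^ 2 * b) = φ (a ^ 2) * φ b := by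
    intro a ha ha1 b
    have hle : ∀ m ∈ M, φ (a ^ 2 * m) ≤ φ m := fun m hm => hM.state_sq_mul_le hA hnn ha hm
    have hge : ∀ m ∈ M, 0 ≤ φ (a ^ 2 * m) := fun m hm => hnn _ (hM.sq_mul_mem a hm)
    rcases (hnn _ (hM.sq_mem a)).eq_or_lt with h0 | hpos
    · obtain ⟨N, h1, h2⟩ := habs b
      have h1 := hge _ h1
      have h2 := hge _ h2
      rw [mul_sub, mul_comm, ← Algebra.smul_def, map_sub, map_smul, ← h0] at h1
      rw [mul_add, mul_comm, ← Algebra.smul_def, map_add, map_smul, ← h0] at h2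
      rw [← h0]
      simp only [smul_eq_mul, mul_zero] at h1 h2
      linarith
    · set t := φ (a ^ 2) with ht
      have ht1 : 0 < 1 - t := by linarith
      have := @hext (fun b => t⁻¹ * φ (a ^ 2 * b)) ?_
        (fun b => (1 - t)⁻¹ * (φ b - φ (a ^ 2 * b))) ?_ ?_
      · have h : t⁻¹ * φ (a ^ 2 * b) = φ b := congrFun this b
        rw [← h]
        field_simp
      · refine ⟨fun x y => ?_, fun c x => ?_, ?_, fun x hx => ?_⟩
        · simp only [mul_add, map_add]
        · simp only [mul_smul_comm, map_smul, smul_eq_mul]; ring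
        · simp only [mul_one]; exact inv_mul_cancel₀ hpos.ne'
        · exact mul_nonneg (inv_nonneg.2 hpos.le) (hge x hx)
      · refine ⟨fun x y => ?_, fun c x => ?_, ?_, fun x hx => ?_⟩
        · simp only [mul_add, map_add]; ring
        · simp only [mul_smul_comm, map_smul, smul_eq_mul]; ring
        · simp only [mul_one, hone]; exact inv_mul_cancel₀ ht1.ne'
        · exact mul_nonneg (inv_nonneg.2 ht1.le) (sub_nonneg.2 (hle x hx))
      · refine ⟨t, 1 - t, hpos, ht1, by ring, ?_⟩
        funext x
        simp only [Pi.add_apply, Pi.smul_apply, smul_eq_mul]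
        field_simp
        ring
  have sq : ∀ a b : A, φ (a ^ 2 * b) = φ (a ^ 2) * φ b := by
    intro a b
    obtain ⟨N, hN⟩ := hA (a ^ 2)
    set K := |N| + 1 with hK
    have hKpos : 0 < K := by positivity
    have hsq : (√K⁻¹) ^ 2 = K⁻¹ := Real.sq_sqrt (inv_nonneg.2 hKpos.le)
    have hsm : (√K⁻¹ • a) ^ 2 = K⁻¹ • a ^ 2 := by rw [smul_pow, hsq]
    have hNa : φ (a ^ 2) ≤ N := by
      have := hnn _ hN
      rw [map_sub, Algebra.algebraMap_eq_smul_one, map_smul, hone, smul_eq_mul] at this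
      linarith
    have h := small (√K⁻¹ • a) ?_ ?_ b
    · rw [hsm, smul_mul_assoc, map_smul, map_smul, smul_eq_mul, smul_eq_mul, mul_assoc] at h
      exact mul_left_cancel₀ (inv_ne_zero hKpos.ne') h
    · rw [hsm]
      have hKN : 0 ≤ K - N := by linarith [le_abs_self N]
      convert hM.smul_mem (inv_nonneg.2 hKpos.le) (hM.add_mem hN (hM.algebraMap_mem hKN)) using 1
      rw [map_sub, show algebraMap ℝ A N - a ^ 2 + (algebraMap ℝ A K - algebraMap ℝ A N)
        = algebraMap ℝ A K - a ^ 2 by ring, smul_sub, Algebra.algebraMap_eq_smul_one, smul_smul,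
        inv_mul_cancel₀ hKpos.ne', one_smul]
    · rw [hsm, map_smul, smul_eq_mul, inv_mul_lt_iff₀ hKpos]
      linarith [le_abs_self N]
  have h1 := sq (a + 1) b
  have h2 := sq a b
  rw [show (a + 1) ^ 2 * b = a ^ 2 * b + (2 : ℝ) • (a * b) + b by
    rw [two_smul]; ring] at h1
  rw [show (a + 1) ^ 2 = a ^ 2 + (2 : ℝ) • a + 1 by rw [two_smul]; ring] at h1
  simp only [map_add, map_smul, smul_eq_mul, hone] at h1
  linarith

/-- **Representation theorem** for Archimedean quadratic modules: an element which is positive at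
all real characters that are nonnegative on the module belongs to the module. -/
theorem mem_of_forall_algHom_pos (hM : IsQuadraticModule M) (hA : IsArchimedeanSet M) {f : A}
    (hf : ∀ φ : A →ₐ[ℝ] ℝ, (∀ m ∈ M, 0 ≤ φ m) → 0 < φ f) : f ∈ M := by
  by_contra hfM
  obtain ⟨φ₀, hφ₀, hφ₀f⟩ := hM.exists_state_nonpos hA hfM
  let l : StrongDual ℝ (A → ℝ) := -ContinuousLinearMap.proj f
  have hexp : IsExposed ℝ (states M) (l.toExposed (states M)) :=
    ContinuousLinearMap.toExposed.isExposed
  have hS := isCompact_states hA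
  obtain ⟨ψ, hψ, hψmax⟩ := hS.exists_isMaxOn ⟨φ₀, hφ₀⟩ l.continuous.continuousOn
  obtain ⟨χ, hχ⟩ := (hexp.isCompact hS).extremePoints_nonempty ⟨ψ, hψ, fun y hy => hψmax hy⟩
  have hχf : χ f ≤ 0 := by
    have h := hχ.1.2 φ₀ hφ₀
    simp only [l, neg_apply, ContinuousLinearMap.proj_apply] at h
    linarith
  have hχe := hexp.isExtreme.extremePoints_subset_extremePoints hχ
  obtain ⟨hadd, hsmul, hone, hnn⟩ := hχe.1
  let χ' : A →ₗ[ℝ] ℝ := { toFun := χ, map_add' := hadd, map_smul' := hsmul }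
  have := hf (AlgHom.ofLinearMap χ' hone
    (hM.map_mul_of_mem_extremePoints hA (φ := χ') hχe)) hnn
  exact absurd this (not_lt.2 hχf)

end IsQuadraticModule

namespace IsSOS

variable {σ : Type*} {p q : MvPolynomial σ ℝ}

theorem zero : IsSOS (0 : MvPolynomial σ ℝ) := ⟨0, Fin.elim0, by simp⟩

theorem sq (a : MvPolynomial σ ℝ) : IsSOS (a ^ 2) := ⟨1, fun _ => a, by simp⟩

theorem one : IsSOS (1 : MvPolynomial σ ℝ) := by simpa using sq (1 : MvPolynomial σ ℝ)

theorem add (hp : IsSOS p) (hq : IsSOS q) : IsSOS (p + q) := by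
  obtain ⟨k, a, rfl⟩ := hp
  obtain ⟨l, b, rfl⟩ := hq
  exact ⟨k + l, Fin.append a b, by simp [Fin.sum_univ_add]⟩

theorem sq_mul (a : MvPolynomial σ ℝ) (hp : IsSOS p) : IsSOS (a ^ 2 * p) := by
  obtain ⟨k, b, rfl⟩ := hp
  exact ⟨k, fun i => a * b i, by simp only [mul_pow, Finset.mul_sum]⟩

theorem eval_nonneg (hp : IsSOS p) (x : σ → ℝ) : 0 ≤ MvPolynomial.eval x p := by
  obtain ⟨k, a, rfl⟩ := hp
  rw [map_sum]
  exact Finset.sum_nonneg fun i _ => by rw [map_pow]; exact sq_nonneg _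

end IsSOS

/-- The quadratic module generated by a finite family of polynomials. -/
def quadModule {σ ι : Type*} [Fintype ι] (G : ι → MvPolynomial σ ℝ) : Set (MvPolynomial σ ℝ) :=
  {p | ∃ (q₀ : MvPolynomial σ ℝ) (q : ι → MvPolynomial σ ℝ),
    IsSOS q₀ ∧ (∀ i, IsSOS (q i)) ∧ p = q₀ + ∑ i, q i * G i}

section quadModule

variable {σ ι : Type*} [Fintype ι] (G : ι → MvPolynomial σ ℝ)

theorem isQuadraticModule_quadModule : IsQuadraticModule (quadModule G) where
  one_mem := ⟨1, 0, IsSOS.one, fun _ => IsSOS.zero, by simp⟩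
  add_mem := by
    rintro _ _ ⟨a, b, ha, hb, rfl⟩ ⟨c, d, hc, hd, rfl⟩
    refine ⟨a + c, b + d, ha.add hc, fun i => (hb i).add (hd i), ?_⟩
    simp only [Pi.add_apply, add_mul, Finset.sum_add_distrib]
    ring
  sq_mul_mem := by
    rintro a _ ⟨b, c, hb, hc, rfl⟩
    refine ⟨a ^ 2 * b, fun i => a ^ 2 * c i, hb.sq_mul a, fun i => (hc i).sq_mul a, ?_⟩
    simp only [mul_add, Finset.mul_sum, mul_assoc]

theorem mem_quadModule (i : ι) : G i ∈ quadModule G := by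
  classical
  refine ⟨0, Pi.single i 1, IsSOS.zero, fun j => ?_, by simp [Pi.single_apply]⟩
  rw [Pi.single_apply]
  split_ifs
  exacts [IsSOS.one, IsSOS.zero]

/-- **Putinar's Positivstellensatz**. -/
theorem mem_quadModule_of_pos
    (hX : ∀ s, ∃ N : ℝ, MvPolynomial.C N - MvPolynomial.X s ^ 2 ∈ quadModule G)
    {p : MvPolynomial σ ℝ}
    (hp : ∀ x, (∀ i, 0 ≤ MvPolynomial.eval x (G i)) → 0 < MvPolynomial.eval x p) :
    p ∈ quadModule G := by
  have hM := isQuadraticModule_quadModule G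
  refine hM.mem_of_forall_algHom_pos (hM.isArchimedeanSet_mvPolynomial hX) fun φ hφ => ?_
  have h : ∀ q, φ q = MvPolynomial.eval (fun i => φ (MvPolynomial.X i)) q := by
    intro q
    rw [← MvPolynomial.aeval_eq_eval]
    exact DFunLike.congr_fun (MvPolynomial.aeval_unique φ) q
  rw [h]
  exact hp _ fun i => by rw [← h]; exact hφ _ (mem_quadModule G i)

/-- If the ball constraint `R² - ∑ⱼ xⱼ²` in some of the variables is in the quadratic module, these
variables are bounded with respect to it. -/
theorem sub_sq_mem_quadModule {τ : Type*} [Fintype τ] (e : τ → σ) (R : ℝ) {i : ι}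
    (hi : G i = MvPolynomial.C (R ^ 2) - ∑ t, MvPolynomial.X (e t) ^ 2) (t : τ) :
    ∃ N : ℝ, MvPolynomial.C N - MvPolynomial.X (e t) ^ 2 ∈ quadModule G := by
  classical
  have hM := isQuadraticModule_quadModule G
  have hsum : ∀ s : Finset τ, ∑ t ∈ s, (MvPolynomial.X (e t) : MvPolynomial σ ℝ) ^ 2 ∈
      quadModule G := by
    intro s
    induction s using Finset.induction_on with
    | empty => simpa using hM.zero_mem
    | insert a s ha ih => rw [Finset.sum_insert ha]; exact hM.add_mem (hM.sq_mem _) ih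
  refine ⟨R ^ 2, ?_⟩
  convert hM.add_mem (mem_quadModule G i) (hsum (Finset.univ.erase t)) using 1
  rw [hi, ← Finset.add_sum_erase _ _ (Finset.mem_univ t)]
  ring

end quadModule

section Approximation

open scoped Pointwise

variable {n : ℕ}

theorem hasFDerivAt_mvPolynomial_eval (P : MvPolynomial (Fin n) ℝ) (x : Fin n → ℝ) :
    HasFDerivAt (fun y => MvPolynomial.eval y P)
      (∑ i, MvPolynomial.eval x (MvPolynomial.pderiv i P) •
        (ContinuousLinearMap.proj i : (Fin n → ℝ) →L[ℝ] ℝ)) x := by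
  induction P using MvPolynomial.induction_on with
  | C a => simpa using hasFDerivAt_const a x
  | add p q hp hq =>
    simp only [map_add, add_smul, Finset.sum_add_distrib]
    exact hp.add hq
  | mul_X p j hp =>
    simp only [map_mul, MvPolynomial.eval_X]
    convert! hp.mul (hasFDerivAt_apply (𝕜 := ℝ) j x) using 1
    simp only [Derivation.leibniz, MvPolynomial.pderiv_X, smul_eq_mul, map_add, map_mul,
      MvPolynomial.eval_X, add_smul, Finset.sum_add_distrib, mul_smul, ← Finset.smul_sum]
    congr 2
    rw [Finset.sum_eq_single j]
    · simp
    · intro i _ hij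
      simp [hij.symm]
    · simp

theorem contDiff_mvPolynomial_eval (P : MvPolynomial (Fin n) ℝ) (k : WithTop ℕ∞) :
    ContDiff ℝ k (fun y => MvPolynomial.eval y P) := by
  induction P using MvPolynomial.induction_on with
  | C a => simpa using contDiff_const
  | add p q hp hq => simpa only [map_add] using hp.add hq
  | mul_X p j hp =>
    simpa only [map_mul, MvPolynomial.eval_X] using hp.mul (contDiff_apply ℝ ℝ j)

/-- The Stone–Weierstrass theorem for polynomials in several variables. -/
theorem exists_mvPolynomial_near {K : Set (Fin n → ℝ)} (hK : IsCompact K) {f : (Fin n → ℝ) → ℝ}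
    (hf : Continuous f) {ε : ℝ} (hε : 0 < ε) :
    ∃ P : MvPolynomial (Fin n) ℝ, ∀ x ∈ K, |MvPolynomial.eval x P - f x| ≤ ε := by
  let Φ : MvPolynomial (Fin n) ℝ →ₐ[ℝ] C(Fin n → ℝ, ℝ) :=
    MvPolynomial.aeval fun i => ⟨fun x => x i, continuous_apply i⟩
  have hΦ : ∀ P x, Φ P x = MvPolynomial.eval x P := by
    intro P x
    induction P using MvPolynomial.induction_on with
    | C a => simp [Φ]
    | add p q hp hq => rw [map_add, ContinuousMap.add_apply, hp, hq, map_add]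
    | mul_X p j hp => rw [map_mul, ContinuousMap.mul_apply, hp, map_mul]; simp [Φ]
  have hsep : Φ.range.SeparatesPoints := by
    intro x y hxy
    obtain ⟨i, hi⟩ := Function.ne_iff.1 hxy
    exact ⟨_, ⟨Φ (MvPolynomial.X i), ⟨_, rfl⟩, rfl⟩, by simpa [hΦ] using hi⟩
  obtain ⟨_, ⟨P, rfl⟩, hP⟩ :=
    ContinuousMap.exists_mem_subalgebra_near_continuous_of_isCompact_of_separatesPoints
      hsep ⟨f, hf⟩ hK hε
  refine ⟨P, fun x hx => ?_⟩
  have := (hP x hx).le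
  rw [← hΦ, ← Real.norm_eq_abs]
  exact this

/-- The convolution of a polynomial with a compactly supported continuous function is a
polynomial. -/
theorem exists_mvPolynomial_eq_integral (p : MvPolynomial (Fin n) ℝ) {f : (Fin n → ℝ) → ℝ}
    (hf : Continuous f) (hcf : HasCompactSupport f) :
    ∃ Q : MvPolynomial (Fin n) ℝ,
      ∀ x, MvPolynomial.eval x Q = ∫ t, MvPolynomial.eval (x - t) p * f t := by
  have hint : ∀ (q : MvPolynomial (Fin n) ℝ) (f : (Fin n → ℝ) → ℝ) (x : Fin n → ℝ),
      Continuous f → HasCompactSupport f →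
      Integrable fun t => MvPolynomial.eval (x - t) q * f t := by
    intro q f x hf hcf
    have hq := MvPolynomial.continuous_eval q
    exact Continuous.integrable_of_hasCompactSupport (by fun_prop) hcf.mul_left
  induction p using MvPolynomial.induction_on generalizing f with
  | C a => exact ⟨MvPolynomial.C (a * ∫ t, f t), fun x => by simp [integral_const_mul]⟩
  | add p q hp hq =>
    obtain ⟨P, hP⟩ := hp hf hcf
    obtain ⟨Q, hQ⟩ := hq hf hcf
    refine ⟨P + Q, fun x => ?_⟩
    rw [map_add, hP, hQ, ← integral_add (hint p f x hf hcf) (hint q f x hf hcf)]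
    simp only [map_add, add_mul]
  | mul_X p i hp =>
    have hf' : Continuous fun t : Fin n → ℝ => t i * f t := by fun_prop
    have hcf' : HasCompactSupport fun t : Fin n → ℝ => t i * f t := hcf.mul_left
    obtain ⟨P, hP⟩ := hp hf hcf
    obtain ⟨Q, hQ⟩ := hp hf' hcf'
    refine ⟨MvPolynomial.X i * P - Q, fun x => ?_⟩
    rw [map_sub, map_mul, MvPolynomial.eval_X, hP, hQ, ← integral_const_mul,
      ← integral_sub ((hint p f x hf hcf).const_mul _) (hint p _ x hf' hcf')]
    congr 1
    funext t
    simp only [map_mul, MvPolynomial.eval_X, Pi.sub_apply]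
    ring

/-- Uniformly close kernels have uniformly close convolutions with a fixed compactly supported
function. -/
theorem norm_integral_smul_sub_le {E : Type*} [NormedAddCommGroup E] [NormedSpace ℝ E]
    {K : Set (Fin n → ℝ)} {f : (Fin n → ℝ) → E} (hf : Continuous f) (hcf : HasCompactSupport f)
    {p φ : (Fin n → ℝ) → ℝ} (hp : Continuous p) (hφ : Continuous φ) {η : ℝ}
    (h : ∀ t ∈ K - tsupport f, |p t - φ t| ≤ η) {x : Fin n → ℝ} (hx : x ∈ K) :
    ‖(∫ t, p t • f (x - t)) - ∫ t, φ t • f (x - t)‖ ≤ η * ∫ t, ‖f t‖ := by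
  have hcx : HasCompactSupport fun t => f (x - t) := by
    exact hcf.comp_homeomorph (Homeomorph.subLeft x)
  have hfx : Continuous fun t => f (x - t) := by fun_prop
  have hint : ∀ q : (Fin n → ℝ) → ℝ, Continuous q → Integrable fun t => q t • f (x - t) :=
    fun q hq => (hq.smul hfx).integrable_of_hasCompactSupport hcx.smul_left
  rw [← integral_sub (hint p hp) (hint φ hφ),
    ← integral_sub_left_eq_self (fun t => ‖f t‖) volume x, ← integral_const_mul]
  refine norm_integral_le_of_norm_le
    ((hfx.norm.integrable_of_hasCompactSupport hcx.norm).const_mul η) (ae_of_all _ fun t => ?_)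
  rw [← sub_smul, norm_smul, Real.norm_eq_abs]
  by_cases ht : f (x - t) = 0
  · simp [ht]
  · exact mul_le_mul_of_nonneg_right
      (h t ⟨x, hx, x - t, subset_tsupport f ht, sub_sub_cancel x t⟩) (norm_nonneg _)

/-- Polynomials are dense in `C¹` on compact sets, for compactly supported functions. -/
theorem exists_mvPolynomial_near_contDiff_of_hasCompactSupport {K : Set (Fin n → ℝ)}
    (hK : IsCompact K) {f : (Fin n → ℝ) → ℝ} (hf : ContDiff ℝ 1 f) (hcf : HasCompactSupport f)
    {ε : ℝ} (hε : 0 < ε) :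
    ∃ P : MvPolynomial (Fin n) ℝ, ∀ x ∈ K, |MvPolynomial.eval x P - f x| ≤ ε ∧
      ‖fderiv ℝ (fun y => MvPolynomial.eval y P) x - fderiv ℝ f x‖ ≤ ε := by
  have hf' : Continuous (fderiv ℝ f) := hf.continuous_fderiv one_ne_zero
  have hcf' : HasCompactSupport (fderiv ℝ f) := hcf.fderiv ℝ
  obtain ⟨δ₁, hδ₁, h₁⟩ := Metric.uniformContinuous_iff.1
    (hcf.uniformContinuous_of_continuous hf.continuous) (ε / 2) (half_pos hε)
  obtain ⟨δ₂, hδ₂, h₂⟩ := Metric.uniformContinuous_iff.1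
    (hcf'.uniformContinuous_of_continuous hf') (ε / 2) (half_pos hε)
  set δ := min δ₁ δ₂ with hδ
  have hδpos : 0 < δ := lt_min hδ₁ hδ₂
  let b : ContDiffBump (0 : Fin n → ℝ) := ⟨δ / 2, δ, half_pos hδpos, half_lt_self hδpos⟩
  set φ : (Fin n → ℝ) → ℝ := b.normed volume with hφdef
  have hφ : Continuous φ := b.continuous_normed
  set C := (∫ t, ‖f t‖) + ∫ t, ‖fderiv ℝ f t‖ with hC
  have hI₁ : 0 ≤ ∫ t, ‖f t‖ := integral_nonneg fun _ => norm_nonneg _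
  have hI₂ : 0 ≤ ∫ t, ‖fderiv ℝ f t‖ := integral_nonneg fun _ => norm_nonneg _
  set η := ε / 2 / (C + 1) with hη
  have hC1 : 0 < C + 1 := by positivity
  have hηpos : 0 < η := by positivity
  have hηC : η * (C + 1) = ε / 2 := div_mul_cancel₀ _ hC1.ne'
  obtain ⟨p, hp⟩ := exists_mvPolynomial_near
    (K := K - tsupport f) (by rw [sub_eq_add_neg]; exact hK.add (IsCompact.neg hcf)) hφ hηpos
  have hpc : Continuous fun t => MvPolynomial.eval t p := MvPolynomial.continuous_eval p
  obtain ⟨Q, hQ⟩ := exists_mvPolynomial_eq_integral p hf.continuous hcf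
  have hQ' : ∀ x, MvPolynomial.eval x Q = ∫ t, MvPolynomial.eval t p • f (x - t) := by
    intro x
    rw [hQ, ← integral_sub_left_eq_self _ volume x]
    simp
  have hQd : ∀ x, fderiv ℝ (fun y => MvPolynomial.eval y Q) x =
      ∫ t, MvPolynomial.eval t p • fderiv ℝ f (x - t) := by
    intro x
    have := (hcf.hasFDerivAt_convolution_right (ContinuousLinearMap.lsmul ℝ ℝ)
      (hpc.locallyIntegrable (μ := volume)) hf x).fderiv
    have hfun : (fun y => MvPolynomial.eval y Q) =
        MeasureTheory.convolution (fun t => MvPolynomial.eval t p) f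
          (ContinuousLinearMap.lsmul ℝ ℝ) volume := by
      funext y
      rw [hQ', MeasureTheory.convolution_def]
      simp
    rw [hfun, this, MeasureTheory.convolution_def]
    congr 1
  have hsupp : ∀ t ∈ K - tsupport (fderiv ℝ f), |MvPolynomial.eval t p - φ t| ≤ η := fun t ht =>
    hp t (Set.sub_subset_sub_left (tsupport_fderiv_subset ℝ) ht)
  refine ⟨Q, fun x hx => ⟨?_, ?_⟩⟩
  · have e₁ := norm_integral_smul_sub_le hf.continuous hcf hpc hφ hp hx
    have e₂ := b.dist_normed_convolution_le (μ := volume) (x₀ := x) (ε := ε / 2)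
      hf.continuous.aestronglyMeasurable
      fun y hy => (h₁ (lt_of_lt_of_le (Metric.mem_ball.1 hy) (min_le_left _ _))).le
    rw [dist_eq_norm, MeasureTheory.convolution_def] at e₂
    simp only [ContinuousLinearMap.lsmul_apply] at e₂
    rw [hQ', ← Real.norm_eq_abs]
    refine (norm_sub_le_norm_sub_add_norm_sub _ _ _).trans (add_le_add e₁ e₂ |>.trans ?_)
    nlinarith
  · have e₁ := norm_integral_smul_sub_le hf' hcf' hpc hφ hsupp hx
    have e₂ := b.dist_normed_convolution_le (μ := volume) (x₀ := x) (ε := ε / 2)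
      hf'.aestronglyMeasurable
      fun y hy => (h₂ (lt_of_lt_of_le (Metric.mem_ball.1 hy) (min_le_right _ _))).le
    rw [dist_eq_norm, MeasureTheory.convolution_def] at e₂
    simp only [ContinuousLinearMap.lsmul_apply] at e₂
    rw [hQd]
    refine (norm_sub_le_norm_sub_add_norm_sub _ _ _).trans (add_le_add e₁ e₂ |>.trans ?_)
    nlinarith

/-- Polynomials are dense in `C¹` on compact sets. -/
theorem exists_mvPolynomial_near_contDiff {K : Set (Fin n → ℝ)} (hK : IsCompact K)
    {v : (Fin n → ℝ) → ℝ} (hv : ContDiff ℝ 1 v) {ε : ℝ} (hε : 0 < ε) :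
    ∃ P : MvPolynomial (Fin n) ℝ, ∀ x ∈ K, |MvPolynomial.eval x P - v x| ≤ ε ∧
      ‖fderiv ℝ (fun y => MvPolynomial.eval y P) x - fderiv ℝ v x‖ ≤ ε := by
  obtain ⟨R, hR, hKR⟩ := hK.isBounded.subset_ball_lt 0 0
  let b : ContDiffBump (0 : Fin n → ℝ) := ⟨R, R + 1, hR, lt_add_one R⟩
  obtain ⟨P, hP⟩ := exists_mvPolynomial_near_contDiff_of_hasCompactSupport hK
    (f := fun x => b x * v x) (b.contDiff.mul hv) b.hasCompactSupport.mul_right hε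
  refine ⟨P, fun x hx => ?_⟩
  have hev : (fun x => b x * v x) =ᶠ[nhds x] v := by
    filter_upwards [b.eventuallyEq_one_of_mem_ball (hKR hx)] with y hy
    rw [hy]
    simp
  have := hP x hx
  rwa [hev.fderiv_eq, hev.eq_of_nhds] at this

end Approximation

theorem isClosed_semiSet {n nX : ℕ} (g : Fin nX → MvPolynomial (Fin n) ℝ) :
    IsClosed (semiSet g) := by
  simp only [semiSet, Set.ofPred_forall]
  exact isClosed_iInter fun i =>
    isClosed_le continuous_const (MvPolynomial.continuous_eval (g i))

theorem isCompact_semiSet {n nX : ℕ} {g : Fin nX → MvPolynomial (Fin n) ℝ} {R : ℝ}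
    (hg : ∃ i, g i = MvPolynomial.C (R ^ 2) - ∑ j : Fin n, (MvPolynomial.X j) ^ 2) :
    IsCompact (semiSet g) := by
  obtain ⟨i, hi⟩ := hg
  refine (isCompact_univ_pi fun _ : Fin n => isCompact_Icc (a := -|R|) (b := |R|)).of_isClosed_subset
    (isClosed_semiSet g) fun x hx j _ => ?_
  have h := hx i
  simp only [hi, map_sub, MvPolynomial.eval_C, map_sum, map_pow, MvPolynomial.eval_X] at h
  have h2 : x j ^ 2 ≤ ∑ j, x j ^ 2 :=
    Finset.single_le_sum (f := fun j => x j ^ 2) (fun j _ => sq_nonneg _) (Finset.mem_univ j)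
  exact abs_le.1 (sq_le_sq.1 (by linarith))

section Hierarchy

variable {n m nX nU : ℕ} {g : Fin nX → MvPolynomial (Fin n) ℝ}
  {h : Fin nU → MvPolynomial (Fin m) ℝ} {F : Fin n → MvPolynomial (Fin n ⊕ Fin m) ℝ} {β : ℝ}

theorem KFeasC.mono {k l : ℕ} (hkl : k ≤ l) {v w : MvPolynomial (Fin n) ℝ}
    (hvw : KFeasC g h F β k v w) : KFeasC g h F β l v w := by
  have h1 : 2 * k ≤ 2 * l := Nat.mul_le_mul_left 2 hkl
  have h2 := Nat.mul_le_mul_right (max 1 (Finset.univ.sup fun i => (F i).totalDegree)) h1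
  obtain ⟨hv, hw, q0, q, r, p0, p, s0, s, hq0, hq, hr, hp0, hp, hs0, hs,
    dq0, dq, dr, dp0, dp, ds0, ds, e⟩ := hvw
  exact ⟨hv.trans h1, hw.trans h1, q0, q, r, p0, p, s0, s, hq0, hq, hr, hp0, hp, hs0, hs,
    dq0.trans h2, fun i => (dq i).trans h2, fun j => (dr j).trans h2, dp0.trans h1,
    fun i => (dp i).trans h1, ds0.trans h1, fun i => (ds i).trans h1, e⟩

theorem kFeasC_zero_one (k : ℕ) : KFeasC g h F β k 0 1 :=
  ⟨by simp, by simp, 0, 0, 0, 0, 0, 1, 0, IsSOS.zero, fun _ => IsSOS.zero, fun _ => IsSOS.zero,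
    IsSOS.zero, fun _ => IsSOS.zero, IsSOS.one, fun _ => IsSOS.zero, by simp, by simp, by simp,
    by simp, by simp, by simp, by simp, by simp, by simp, by simp⟩

/-- The dynamics polynomial `β v - ∇v · f` evaluates to the expected expression. -/
theorem eval_dynamics (v : MvPolynomial (Fin n) ℝ) (x : Fin n → ℝ) (u : Fin m → ℝ) :
    MvPolynomial.eval (Sum.elim x u) (MvPolynomial.C β * MvPolynomial.rename Sum.inl v
        - ∑ i, MvPolynomial.rename Sum.inl (MvPolynomial.pderiv i v) * F i) =
      β * MvPolynomial.eval x v -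
        fderiv ℝ (fun y => MvPolynomial.eval y v) x (polyMapEval F x u) := by
  rw [(hasFDerivAt_mvPolynomial_eval v x).fderiv]
  simp [MvPolynomial.eval_rename, polyMapEval]

/-- Every `k`-feasible pair is feasible for the dual LP. -/
theorem KFeasC.dualFeasC {k : ℕ} {v w : MvPolynomial (Fin n) ℝ} (hvw : KFeasC g h F β k v w) :
    DualFeasC g h F β (fun x => MvPolynomial.eval x v) (fun x => MvPolynomial.eval x w) := by
  obtain ⟨-, -, q0, q, r, p0, p, s0, s, hq0, hq, hr, hp0, hp, hs0, hs,
    -, -, -, -, -, -, -, e₁, e₂, e₃⟩ := hvw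
  refine ⟨contDiff_mvPolynomial_eval v 1, MvPolynomial.continuous_eval w, fun x hx u hu => ?_,
    fun x hx => ?_, fun x hx => ?_⟩
  · rw [← sub_nonneg, ← eval_dynamics, e₁]
    simp only [map_add, map_sum, map_mul, MvPolynomial.eval_rename, Sum.elim_comp_inl,
      Sum.elim_comp_inr]
    exact add_nonneg (add_nonneg (hq0.eval_nonneg _)
      (Finset.sum_nonneg fun i _ => mul_nonneg ((hq i).eval_nonneg _) (hx i)))
      (Finset.sum_nonneg fun j _ => mul_nonneg ((hr j).eval_nonneg _) (hu j))
  · have := congrArg (MvPolynomial.eval x) e₂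
    simp only [map_add, map_sub, map_sum, map_mul, map_one] at this
    have h2 : 0 ≤ MvPolynomial.eval x p0 +
        ∑ i, MvPolynomial.eval x (p i) * MvPolynomial.eval x (g i) :=
      add_nonneg (hp0.eval_nonneg _)
        (Finset.sum_nonneg fun i _ => mul_nonneg ((hp i).eval_nonneg _) (hx i))
    linarith
  · rw [e₃]
    simp only [map_add, map_sum, map_mul]
    exact add_nonneg (hs0.eval_nonneg _)
      (Finset.sum_nonneg fun i _ => mul_nonneg ((hs i).eval_nonneg _) (hx i))

/-- Strictly feasible polynomial pairs are `k`-feasible for some `k`. -/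
theorem exists_kFeasC_of_pos {RX RU : ℝ}
    (hgball : ∃ i, g i = MvPolynomial.C (RX ^ 2) - ∑ j : Fin n, (MvPolynomial.X j) ^ 2)
    (hhball : ∃ j, h j = MvPolynomial.C (RU ^ 2) - ∑ i : Fin m, (MvPolynomial.X i) ^ 2)
    {v w : MvPolynomial (Fin n) ℝ}
    (h₁ : ∀ x ∈ semiSet g, ∀ u ∈ semiSet h,
      fderiv ℝ (fun y => MvPolynomial.eval y v) x (polyMapEval F x u) <
        β * MvPolynomial.eval x v)
    (h₂ : ∀ x ∈ semiSet g, MvPolynomial.eval x v + 1 < MvPolynomial.eval x w)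
    (h₃ : ∀ x ∈ semiSet g, 0 < MvPolynomial.eval x w) :
    ∃ k, KFeasC g h F β k v w := by
  obtain ⟨i₀, hi₀⟩ := hgball
  obtain ⟨j₀, hj₀⟩ := hhball
  have hX : ∀ s, ∃ N : ℝ, MvPolynomial.C N - MvPolynomial.X s ^ 2 ∈ quadModule g :=
    sub_sq_mem_quadModule g id RX hi₀
  let G : Fin nX ⊕ Fin nU → MvPolynomial (Fin n ⊕ Fin m) ℝ :=
    Sum.elim (fun i => MvPolynomial.rename Sum.inl (g i))
      (fun j => MvPolynomial.rename Sum.inr (h j))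
  have hXU : ∀ s, ∃ N : ℝ, MvPolynomial.C N - MvPolynomial.X s ^ 2 ∈ quadModule G := by
    rintro (s | s)
    · exact sub_sq_mem_quadModule G Sum.inl RX (i := Sum.inl i₀) (by simp [G, hi₀]) s
    · exact sub_sq_mem_quadModule G Sum.inr RU (i := Sum.inr j₀) (by simp [G, hj₀]) s
  obtain ⟨q0, q, hq0, hq, e₁⟩ := mem_quadModule_of_pos G hXU
    (p := MvPolynomial.C β * MvPolynomial.rename Sum.inl v
        - ∑ i, MvPolynomial.rename Sum.inl (MvPolynomial.pderiv i v) * F i) (by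
    intro z hz
    obtain ⟨x, u, rfl⟩ : ∃ x u, z = Sum.elim x u :=
      ⟨z ∘ Sum.inl, z ∘ Sum.inr, (Sum.elim_comp_inl_inr z).symm⟩
    rw [eval_dynamics, sub_pos]
    refine h₁ x (fun i => ?_) u (fun j => ?_)
    · simpa [G, MvPolynomial.eval_rename] using hz (Sum.inl i)
    · simpa [G, MvPolynomial.eval_rename] using hz (Sum.inr j))
  obtain ⟨p0, p, hp0, hp, e₂⟩ := mem_quadModule_of_pos g hX (p := w - v - 1) (by
    intro x hx
    have := h₂ x hx
    simp only [map_sub, map_one]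
    linarith)
  obtain ⟨s0, s, hs0, hs, e₃⟩ := mem_quadModule_of_pos g hX (p := w) h₃
  rw [Fintype.sum_sum_type, ← add_assoc] at e₁
  have hsup : ∀ {k : ℕ} (d : Fin k → ℕ) (i : Fin k), d i ≤ Finset.univ.sup d :=
    fun d i => Finset.le_sup (Finset.mem_univ i)
  set dq := Finset.univ.sup fun i => (q (Sum.inl i) * G (Sum.inl i)).totalDegree with hdq
  set dr := Finset.univ.sup fun j => (q (Sum.inr j) * G (Sum.inr j)).totalDegree with hdr
  set dp := Finset.univ.sup fun i => (p i * g i).totalDegree with hdp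
  set ds := Finset.univ.sup fun i => (s i * g i).totalDegree with hds
  set k := v.totalDegree + w.totalDegree + q0.totalDegree + dq + dr + p0.totalDegree + dp +
    s0.totalDegree + ds with hk
  have hle : ∀ {d : ℕ}, d ≤ k →
      d ≤ 2 * k * max 1 (Finset.univ.sup fun i => (F i).totalDegree) := fun {d} hd =>
    (show d ≤ 2 * k by omega).trans (Nat.le_mul_of_pos_right _ (by positivity))
  refine ⟨k, by omega, by omega, q0, fun i => q (Sum.inl i), fun j => q (Sum.inr j), p0, p, s0, s,
    hq0, fun i => hq _, fun j => hq _, hp0, hp, hs0, hs, hle (by omega), fun i => hle ?_,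
    fun j => hle ?_, by omega, fun i => ?_, by omega, fun i => ?_, e₁, e₂, e₃⟩
  · exact (hsup (fun i => (q (Sum.inl i) * G (Sum.inl i)).totalDegree) i).trans (by omega)
  · exact (hsup (fun j => (q (Sum.inr j) * G (Sum.inr j)).totalDegree) j).trans (by omega)
  · exact (hsup (fun i => (p i * g i).totalDegree) i).trans (by omega)
  · exact (hsup (fun i => (s i * g i).totalDegree) i).trans (by omega)

/-- Every feasible pair for the dual LP is approximated by strictly feasible polynomials. -/
theorem DualFeasC.exists_kFeasC_near (hβ : 0 < β) {RX RU : ℝ}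
    (hgball : ∃ i, g i = MvPolynomial.C (RX ^ 2) - ∑ j : Fin n, (MvPolynomial.X j) ^ 2)
    (hhball : ∃ j, h j = MvPolynomial.C (RU ^ 2) - ∑ i : Fin m, (MvPolynomial.X i) ^ 2)
    {v w : (Fin n → ℝ) → ℝ} (hvw : DualFeasC g h F β v w) {δ : ℝ} (hδ : 0 < δ) :
    ∃ k V W, KFeasC g h F β k V W ∧ ∀ x ∈ semiSet g, MvPolynomial.eval x W ≤ w x + δ := by
  obtain ⟨hv, hw, h₁, h₂, h₃⟩ := hvw
  have hKX := isCompact_semiSet hgball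
  have hKU := isCompact_semiSet hhball
  have hF : Continuous fun z : (Fin n → ℝ) × (Fin m → ℝ) => polyMapEval F z.1 z.2 := by
    refine continuous_pi fun i => (MvPolynomial.continuous_eval (F i)).comp
      (continuous_pi fun s => ?_)
    cases s <;> simp only [Sum.elim_inl, Sum.elim_inr] <;> fun_prop
  obtain ⟨B, hB⟩ := (hKX.prod hKU).exists_bound_of_continuousOn hF.continuousOn
  set γ := δ / 5 with hγ
  have hγpos : 0 < γ := by positivity
  set ε := min γ (β * γ / (2 * (β + |B|))) with hε
  have hεpos : 0 < ε := lt_min hγpos (by positivity)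
  have hε₁ : ε ≤ γ := min_le_left _ _
  have hε₂ : ε * (β + |B|) < β * γ := by
    have h : ε ≤ β * γ / (2 * (β + |B|)) := min_le_right _ _
    rw [le_div_iff₀ (by positivity)] at h
    have : 0 < β * γ := by positivity
    linarith
  obtain ⟨P, hP⟩ := exists_mvPolynomial_near_contDiff hKX hv hεpos
  obtain ⟨Q, hQ⟩ := exists_mvPolynomial_near hKX hw hγpos
  have hPd : ∀ x, fderiv ℝ (fun y => MvPolynomial.eval y (P + MvPolynomial.C γ)) x =
      fderiv ℝ (fun y => MvPolynomial.eval y P) x := by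
    intro x
    simp only [map_add, MvPolynomial.eval_C, fderiv_add_const]
  obtain ⟨k, hk⟩ := exists_kFeasC_of_pos (F := F) (β := β) hgball hhball
    (v := P + MvPolynomial.C γ) (w := Q + MvPolynomial.C (4 * γ)) (by
      intro x hx u hu
      obtain ⟨hP₁, hP₂⟩ := hP x hx
      have hB := (hB (x, u) ⟨hx, hu⟩).trans (le_abs_self B)
      have h4 : |(fderiv ℝ (fun y => MvPolynomial.eval y P) x - fderiv ℝ v x)
          (polyMapEval F x u)| ≤ ε * |B| :=
        (ContinuousLinearMap.le_opNorm _ _).trans (mul_le_mul hP₂ hB (norm_nonneg _) hεpos.le)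
      rw [sub_apply] at h4
      have h5 := (abs_le.1 h4).2
      have h6 := mul_le_mul_of_nonneg_left (abs_le.1 hP₁).1 hβ.le
      have h7 := h₁ x hx u hu
      rw [hPd]
      simp only [map_add, MvPolynomial.eval_C]
      nlinarith) (by
      intro x hx
      have h4 := (abs_le.1 (hP x hx).1).2
      have h5 := (abs_le.1 (hQ x hx)).1
      have h6 := h₂ x hx
      simp only [map_add, MvPolynomial.eval_C]
      linarith) (by
      intro x hx
      have h5 := (abs_le.1 (hQ x hx)).1
      have h6 := h₃ x hx
      simp only [map_add, MvPolynomial.eval_C]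
      linarith)
  refine ⟨k, _, _, hk, fun x hx => ?_⟩
  have h5 := (abs_le.1 (hQ x hx)).2
  simp only [map_add, MvPolynomial.eval_C]
  linarith

theorem DualFeasC.integral_nonneg {v w : (Fin n → ℝ) → ℝ} (hvw : DualFeasC g h F β v w) :
    0 ≤ ∫ x in semiSet g, w x :=
  setIntegral_nonneg (isClosed_semiSet g).measurableSet hvw.2.2.2.2

theorem bddBelow_dualFeasC : BddBelow {r : ℝ | ∃ v w, DualFeasC g h F β v w ∧
    r = ∫ x in semiSet g, w x ∂volume} :=
  ⟨0, by rintro _ ⟨v, w, hvw, rfl⟩; exact hvw.integral_nonneg⟩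

theorem bddBelow_kFeasC (k : ℕ) : BddBelow {r : ℝ | ∃ v w, KFeasC g h F β k v w ∧
    r = ∫ x in semiSet g, MvPolynomial.eval x w ∂volume} :=
  ⟨0, by rintro _ ⟨v, w, hvw, rfl⟩; exact hvw.dualFeasC.integral_nonneg⟩

theorem nonempty_kFeasC (k : ℕ) : {r : ℝ | ∃ v w, KFeasC g h F β k v w ∧
    r = ∫ x in semiSet g, MvPolynomial.eval x w ∂volume}.Nonempty :=
  ⟨_, 0, 1, kFeasC_zero_one k, rfl⟩

theorem antitone_sosValC : Antitone (sosValC g h F β) := fun k l hkl =>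
  csInf_le_csInf (bddBelow_kFeasC l) (nonempty_kFeasC k) fun _ ⟨v, w, hvw, hr⟩ =>
    ⟨v, w, hvw.mono hkl, hr⟩

theorem dualValC_le_sosValC (k : ℕ) : dualValC g h F β ≤ sosValC g h F β k :=
  csInf_le_csInf bddBelow_dualFeasC (nonempty_kFeasC k) fun _ ⟨_, _, hvw, hr⟩ =>
    ⟨_, _, hvw.dualFeasC, hr⟩

theorem exists_sosValC_lt (hβ : 0 < β) {RX RU : ℝ}
    (hgball : ∃ i, g i = MvPolynomial.C (RX ^ 2) - ∑ j : Fin n, (MvPolynomial.X j) ^ 2)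
    (hhball : ∃ j, h j = MvPolynomial.C (RU ^ 2) - ∑ i : Fin m, (MvPolynomial.X i) ^ 2)
    {c : ℝ} (hc : dualValC g h F β < c) : ∃ k, sosValC g h F β k < c := by
  have hne : {r : ℝ | ∃ v w, DualFeasC g h F β v w ∧
      r = ∫ x in semiSet g, w x ∂volume}.Nonempty :=
    ⟨_, _, _, (kFeasC_zero_one (g := g) (h := h) (F := F) (β := β) 0).dualFeasC, rfl⟩
  obtain ⟨_, ⟨v, w, hvw, rfl⟩, hr⟩ := exists_lt_of_csInf_lt hne hc
  have hK := isCompact_semiSet hgball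
  set I := ∫ x in semiSet g, w x with hI
  set V := volume.real (semiSet g) with hV
  have hV0 : 0 ≤ V := measureReal_nonneg
  set δ := (c - I) / (2 * (V + 1)) with hδ
  have hcI : 0 < c - I := sub_pos.2 hr
  have hδpos : 0 < δ := by positivity
  obtain ⟨k, P, W, hPW, hW⟩ := hvw.exists_kFeasC_near hβ hgball hhball hδpos
  refine ⟨k, (csInf_le (bddBelow_kFeasC k) ⟨P, W, hPW, rfl⟩).trans_lt ?_⟩
  have hwi : IntegrableOn w (semiSet g) := hvw.2.1.continuousOn.integrableOn_compact hK
  have hci : IntegrableOn (fun _ => δ) (semiSet g) := continuousOn_const.integrableOn_compact hK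
  have h1 : ∫ x in semiSet g, MvPolynomial.eval x W ≤ ∫ x in semiSet g, (w x + δ) :=
    setIntegral_mono_on
      ((MvPolynomial.continuous_eval W).continuousOn.integrableOn_compact hK)
      (hwi.add hci) (isClosed_semiSet g).measurableSet hW
  have h2 : ∫ x in semiSet g, (w x + δ) = I + V * δ := by
    rw [integral_add hwi hci, setIntegral_const, smul_eq_mul]
  have h3 : δ * (2 * (V + 1)) = c - I := div_mul_cancel₀ _ (by positivity)
  have h4 : 0 ≤ V * δ := by positivity
  nlinarith

end Hierarchy

/-- The continuous-time dual SOS values converge monotonically from above to the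
optimal value of the continuous-time dual LP. -/
theorem sos_hierarchy_converges_continuous {n m nX nU : ℕ}
    (g : Fin nX → MvPolynomial (Fin n) ℝ) (h : Fin nU → MvPolynomial (Fin m) ℝ)
    (F : Fin n → MvPolynomial (Fin n ⊕ Fin m) ℝ)
    (β : ℝ) (hβ : 0 < β)
    (RX RU : ℝ) (hRX : 0 < RX) (hRU : 0 < RU)
    -- Assumption 1: one of the gᵢ (resp. hⱼ) is the ball constraint R² − ‖·‖²
    (hgball : ∃ i, g i = MvPolynomial.C (RX ^ 2) - ∑ j : Fin n, (MvPolynomial.X j) ^ 2)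
    (hhball : ∃ j, h j = MvPolynomial.C (RU ^ 2) - ∑ i : Fin m, (MvPolynomial.X i) ^ 2) :
    (∀ k, sosValC g h F β (k + 1) ≤ sosValC g h F β k) ∧
    (∀ k, dualValC g h F β ≤ sosValC g h F β k) ∧
    Filter.Tendsto (fun k => sosValC g h F β k) Filter.atTop (nhds (dualValC g h F β)) := by
  refine ⟨fun k => antitone_sosValC k.le_succ, dualValC_le_sosValC, ?_⟩
  refine tendsto_order.2 ⟨fun c hc => Filter.Eventually.of_forall fun k =>
    hc.trans_le (dualValC_le_sosValC k), fun c hc => ?_⟩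
  obtain ⟨k, hk⟩ := exists_sosValC_lt hβ hgball hhball hc
  filter_upwards [Filter.eventually_ge_atTop k] with l hl
  exact (antitone_sosValC hl).trans_lt hk
end
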